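/- arXiv:2602.03642 — 4 statements merged into one kernel-verified Lean document; each statement's English description precedes it below -/
import Mathlib

section
/- Let K be a number field. Then there exist constants C > 0 and C′ > 0 (where C equals the residue at s = 1 of the Dedekind zeta function of K divided by the class number h_K) such that for every real x ≥ 2, |∑_{I nonzero principal ideal of O_K, N(I) ≤ x} 1/N(I) − C·log x| ≤ C′. -/
open NumberField

/-!
Localize the sum over principal ideals to `|log N(I) - y| ≤ 1` by a smooth bump. In the logarithmic
coordinates of the mixed space, products of bumps form a partition of unity under the unit group
modulo torsion, so the localized sum is the sum over the lattice `𝓞 K`, scaled by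
`t⁻¹ = exp (-y / n)`, of a fixed `C¹` function with compact support away from the points of norm
zero. A lattice sum of such a function differs from its integral by a relative error `O(1 / t)`;
hence the localized sum is `V + O(exp (-y / n))`. As the bumps telescope, adding these up over
integers `0 ≤ y ≤ log x` gives `V log x + O(1)`.

By partial summation, a density `κ` of the set of principal ideals also forces `κ log x` as leading
term, and the analytic class number formula gives `κ = residue / h`; thus `V = residue / h`.
-/

section LatticeSum

open MeasureTheory Module

variable {E : Type*} [NormedAddCommGroup E] [NormedSpace ℝ E]

variable {φ : E → ℝ} {C : NNReal} {R r t : ℝ} {F : Set E}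

lemma norm_sub_inv_smul_add_le_indicator (hC : LipschitzWith C φ) (hR : ∀ x, R < ‖x‖ → φ x = 0)
    (ht : 1 ≤ t) (v : E) {y : E} (hy : ‖y‖ ≤ r) :
    ‖φ (t⁻¹ • v) - φ (t⁻¹ • (v + y))‖ ≤
      C * r / t * (Metric.closedBall (0 : E) (R + r)).indicator 1 (t⁻¹ • (v + y)) := by
  have hr : 0 ≤ r := (norm_nonneg y).trans hy
  have norm_sub_le : ‖t⁻¹ • v - t⁻¹ • (v + y)‖ ≤ r / t := by
    rw [← smul_sub, sub_add_cancel_left, norm_smul, norm_neg, norm_inv,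
      Real.norm_of_nonneg (by positivity), inv_mul_eq_div]
    gcongr
  by_cases hmem : t⁻¹ • (v + y) ∈ Metric.closedBall (0 : E) (R + r)
  · rw [Set.indicator_of_mem hmem, Pi.one_apply, mul_one, mul_div_assoc]
    exact (hC.norm_sub_le _ _).trans (by gcongr)
  · rw [Set.indicator_of_notMem hmem, mul_zero]
    rw [mem_closedBall_zero_iff, not_le] at hmem
    have hv : R < ‖t⁻¹ • v‖ := by
      linarith [norm_sub_norm_le (t⁻¹ • (v + y)) (t⁻¹ • v), div_le_self hr ht,
        norm_sub_rev (t⁻¹ • v) (t⁻¹ • (v + y))]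
    rw [hR _ hv, hR _ (by linarith), sub_zero, norm_zero]

variable [MeasurableSpace E] [BorelSpace E] {μ : Measure E}

lemma norm_measureReal_mul_sub_setIntegral_le [ProperSpace E] [IsFiniteMeasureOnCompacts μ]
    (hC : LipschitzWith C φ) (hR : ∀ x, R < ‖x‖ → φ x = 0) (hF : MeasurableSet F)
    (hr : ∀ y ∈ F, ‖y‖ ≤ r) (ht : 1 ≤ t) (v : E) :
    ‖μ.real F * φ (t⁻¹ • v) - ∫ y in F, φ (t⁻¹ • (v + y)) ∂μ‖ ≤
      C * r / t *
        ∫ y in F, (Metric.closedBall (0 : E) (R + r)).indicator 1 (t⁻¹ • (v + y)) ∂μ := by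
  have hsub : F ⊆ Metric.closedBall 0 r := fun y hy ↦ by simpa using hr y hy
  have : IsFiniteMeasure (μ.restrict F) := isFiniteMeasure_restrict.mpr
    ((measure_mono hsub).trans_lt (isCompact_closedBall (0 : E) r).measure_lt_top).ne
  have hφ : Integrable (fun y ↦ φ (t⁻¹ • (v + y))) (μ.restrict F) :=
    (hC.continuous.comp (by fun_prop) |>.continuousOn.integrableOn_compact
      (isCompact_closedBall 0 r)).mono_set hsub
  have hind : Integrable (fun y ↦ (Metric.closedBall (0 : E) (R + r)).indicator (1 : E → ℝ)
      (t⁻¹ • (v + y))) (μ.restrict F) :=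
    .of_bound ((measurable_one.indicator Metric.isClosed_closedBall.measurableSet).comp
      (by fun_prop)).aestronglyMeasurable 1
      (.of_forall fun y ↦ by simpa using norm_indicator_le_norm_self (1 : E → ℝ) (t⁻¹ • (v + y)))
  rw [← smul_eq_mul, ← setIntegral_const, ← integral_sub (integrable_const _) hφ,
    ← integral_const_mul]
  exact norm_integral_le_of_norm_le (hind.const_mul _) <| (ae_restrict_iff' hF).mpr <|
    .of_forall fun y hy ↦ norm_sub_inv_smul_add_le_indicator hC hR ht v (hr y hy)

variable [FiniteDimensional ℝ E] [μ.IsAddHaarMeasure]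

lemma hasSum_setIntegral_inv_smul_add {L : AddSubgroup E} [Countable L]
    (hF : IsAddFundamentalDomain L F μ) {ψ : E → ℝ} (hψ : Integrable ψ μ) (ht : 0 < t) :
    HasSum (fun v : L ↦ ∫ y in F, ψ (t⁻¹ • (v + y)) ∂μ) (t ^ finrank ℝ E * ∫ y, ψ y ∂μ) := by
  rw [← smul_eq_mul, ← Measure.integral_comp_inv_smul_of_nonneg μ ψ ht.le]
  have hint : Integrable (fun y ↦ ψ (t⁻¹ • y)) μ := hψ.comp_smul (inv_ne_zero ht.ne')
  rw [← hF.sum_restrict] at hint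
  have hsum := hasSum_integral_measure hint
  rw [hF.sum_restrict] at hsum
  refine hsum.congr_fun fun v ↦ ?_
  rw [← Set.image_vadd, (measurePreserving_vadd v μ).setIntegral_image_emb
    (measurableEmbedding_const_vadd v)]
  rfl

theorem exists_forall_abs_latticeSum_sub_integral_le {L : AddSubgroup E} [Countable L]
    (hF : IsAddFundamentalDomain L F μ) (hFm : MeasurableSet F) (hFb : Bornology.IsBounded F)
    (hC : LipschitzWith C φ) (hφ : HasCompactSupport φ) :
    ∃ D, ∀ t : ℝ, 1 ≤ t → Summable (fun v : L ↦ φ (t⁻¹ • v)) ∧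
      |(t ^ finrank ℝ E)⁻¹ * ∑' v : L, φ (t⁻¹ • v) - (μ.real F)⁻¹ * ∫ y, φ y ∂μ| ≤ D / t := by
  obtain ⟨R, hR⟩ := hφ.isCompact.isBounded.exists_norm_le
  replace hR : ∀ x, R < ‖x‖ → φ x = 0 := fun x hx ↦
    image_eq_zero_of_notMem_tsupport fun hmem ↦ (hR x hmem).not_gt hx
  obtain ⟨r, hr⟩ := hFb.exists_norm_le
  have hμF : 0 < μ.real F := ENNReal.toReal_pos (hF.measure_ne_zero (NeZero.ne μ))
    hFb.measure_lt_top.ne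
  set B := Metric.closedBall (0 : E) (R + r)
  refine ⟨C * r * μ.real B / μ.real F, fun t ht ↦ ?_⟩
  have ht0 : 0 < t := one_pos.trans_le ht
  have hB : HasSum (fun v : L ↦ ∫ y in F, B.indicator 1 (t⁻¹ • (v + y)) ∂μ)
      (t ^ finrank ℝ E * μ.real B) := by
    rw [← integral_indicator_one (μ := μ) Metric.isClosed_closedBall.measurableSet]
    exact hasSum_setIntegral_inv_smul_add hF ((integrable_indicator_iff
      Metric.isClosed_closedBall.measurableSet).mpr
        (integrableOn_const (isCompact_closedBall _ _).measure_lt_top.ne)) ht0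
  have hI := hasSum_setIntegral_inv_smul_add hF
    (hC.continuous.integrable_of_hasCompactSupport hφ (μ := μ)) ht0
  have hle (v : L) := norm_measureReal_mul_sub_setIntegral_le (μ := μ) hC hR hFm hr ht v
  have herr := hB.mul_left (C * r / t)
  have hsum : Summable (fun v : L ↦ φ (t⁻¹ • v)) := by
    have := (Summable.of_norm_bounded herr.summable hle).add hI.summable
    simpa only [sub_add_cancel, summable_mul_left_iff hμF.ne'] using this
  refine ⟨hsum, ?_⟩
  have key := ((hsum.hasSum.mul_left (μ.real F)).sub hI).norm_le_of_bounded herr hle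
  calc |(t ^ finrank ℝ E)⁻¹ * ∑' v : L, φ (t⁻¹ • v) - (μ.real F)⁻¹ * ∫ y, φ y ∂μ|
      = (t ^ finrank ℝ E * μ.real F)⁻¹ *
          ‖μ.real F * ∑' v : L, φ (t⁻¹ • v) - t ^ finrank ℝ E * ∫ y, φ y ∂μ‖ := by
        rw [← abs_of_pos (by positivity : 0 < (t ^ finrank ℝ E * μ.real F)⁻¹), Real.norm_eq_abs,
          ← abs_mul]
        congr 1
        field_simp
    _ ≤ (t ^ finrank ℝ E * μ.real F)⁻¹ * (C * r / t * (t ^ finrank ℝ E * μ.real B)) := by gcongr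
    _ = C * r * μ.real B / μ.real F / t := by field_simp

end LatticeSum

section Bump

/-- A smooth bump supported in `[-1, 1]` whose integer translates form a partition of unity; as a
difference of two translates of `Real.smoothTransition`, it telescopes. -/
noncomputable def unitBump (y : ℝ) : ℝ :=
  Real.smoothTransition (y + 1) - Real.smoothTransition y

lemma contDiff_unitBump {n : ℕ∞} : ContDiff ℝ n unitBump :=
  (Real.smoothTransition.contDiff.comp (contDiff_id.add contDiff_const)).sub
    Real.smoothTransition.contDiff

lemma unitBump_eq_zero {y : ℝ} (hy : 1 ≤ |y|) : unitBump y = 0 := by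
  rcases le_abs.mp hy with hy | hy
  · rw [unitBump, Real.smoothTransition.one_of_one_le hy,
      Real.smoothTransition.one_of_one_le (by linarith), sub_self]
  · rw [unitBump, Real.smoothTransition.zero_of_nonpos (by linarith),
      Real.smoothTransition.zero_of_nonpos (by linarith), sub_self]

lemma sum_range_unitBump_sub (y : ℝ) (M : ℕ) :
    ∑ k ∈ Finset.range M, unitBump (y - k) =
      Real.smoothTransition (y + 1) - Real.smoothTransition (y + 1 - M) := by
  induction M with
  | zero => simp
  | succ M ih =>
    rw [Finset.sum_range_succ, ih, unitBump]
    push_cast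
    ring_nf

lemma sum_Ico_unitBump_add_intCast {y : ℝ} {M : ℕ} (hM : |y| + 1 ≤ M) :
    ∑ e ∈ Finset.Ico (-M : ℤ) M, unitBump (y + e) = 1 := by
  have ⟨hlo, hhi⟩ := abs_le.mp (le_sub_iff_add_le.mpr hM)
  calc ∑ e ∈ Finset.Ico (-M : ℤ) M, unitBump (y + e)
      = Real.smoothTransition (y + M) - Real.smoothTransition (y - M) := by
        have := Finset.sum_Ico_int_sub M fun e : ℤ ↦ -Real.smoothTransition (y + e)
        simpa [unitBump, sub_eq_add_neg, add_comm, add_assoc, add_left_comm] using this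
    _ = 1 := by
        rw [Real.smoothTransition.one_of_one_le (by linarith),
          Real.smoothTransition.zero_of_nonpos (by linarith), sub_zero]

lemma hasSum_prod_unitBump_add_intCast {ι : Type*} [Fintype ι] (y : ι → ℝ) :
    HasSum (fun e : ι → ℤ ↦ ∏ i, unitBump (y i + e i)) 1 := by
  classical
  obtain ⟨M, hM⟩ := exists_nat_ge (‖y‖ + 1)
  have hy (i : ι) : |y i| + 1 ≤ M := by
    linarith [norm_le_pi_norm y i, Real.norm_eq_abs (y i)]
  have hbox : ∑ e ∈ Fintype.piFinset fun _ ↦ Finset.Ico (-M : ℤ) M,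
      ∏ i, unitBump (y i + e i) = 1 := by
    rw [← Finset.prod_univ_sum (f := fun i (e : ℤ) ↦ unitBump (y i + e))]
    exact Finset.prod_eq_one fun i _ ↦ sum_Ico_unitBump_add_intCast (hy i)
  rw [← hbox]
  refine hasSum_sum_of_ne_finset_zero fun e he ↦ ?_
  obtain ⟨i, hi⟩ : ∃ i, e i ∉ Finset.Ico (-M : ℤ) M := by simpa using he
  refine Finset.prod_eq_zero (Finset.mem_univ i) (unitBump_eq_zero ?_)
  have he' : (M : ℝ) ≤ |(e i : ℝ)| := by
    have : (M : ℤ) ≤ |e i| := by grind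
    exact_mod_cast this
  rw [add_comm]
  linarith [hy i, abs_sub_abs_le_abs_add (e i : ℝ) (y i)]

end Bump

section Telescoping

variable {P : Type*} {ℓ c : P → ℝ}

lemma summable_of_forall_lt_imp_eq_zero (hfin : ∀ y, {p | ℓ p ≤ y}.Finite) {f : P → ℝ} {y : ℝ}
    (hf : ∀ p, y < ℓ p → f p = 0) : Summable f :=
  summable_of_hasFiniteSupport <| (hfin y).subset fun p hp ↦ not_lt.mp fun hlt ↦ hp (hf p hlt)

lemma summable_unitBump_sub_mul (hfin : ∀ y, {p | ℓ p ≤ y}.Finite) (y : ℝ) :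
    Summable fun p ↦ unitBump (ℓ p - y) * c p :=
  summable_of_forall_lt_imp_eq_zero hfin (y := y + 1) fun p hp ↦ by
    rw [unitBump_eq_zero (le_abs.mpr (.inl (by linarith))), zero_mul]

lemma hasSum_one_sub_smoothTransition_mul (hℓ : ∀ p, 0 ≤ ℓ p) (hfin : ∀ y, {p | ℓ p ≤ y}.Finite)
    (M : ℕ) :
    HasSum (fun p ↦ (1 - Real.smoothTransition (ℓ p + 1 - M)) * c p)
      (∑ k ∈ Finset.range M, ∑' p, unitBump (ℓ p - k) * c p) := by
  have hsum := hasSum_sum fun (k : ℕ) (_ : k ∈ Finset.range M) ↦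
    (summable_unitBump_sub_mul (c := c) hfin k).hasSum
  refine hsum.congr_fun fun p ↦ ?_
  rw [← Finset.sum_mul, sum_range_unitBump_sub,
    Real.smoothTransition.one_of_one_le (show 1 ≤ ℓ p + 1 by linarith [hℓ p])]

variable {y : ℝ} {M : ℕ}

lemma sum_range_tsum_unitBump_le_tsum_indicator (hℓ : ∀ p, 0 ≤ ℓ p)
    (hfin : ∀ y, {p | ℓ p ≤ y}.Finite) (hc : ∀ p, 0 ≤ c p) (hM : M ≤ y) :
    ∑ k ∈ Finset.range M, ∑' p, unitBump (ℓ p - k) * c p ≤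
      ∑' p, {p | ℓ p ≤ y}.indicator c p := by
  have hsum := hasSum_one_sub_smoothTransition_mul (c := c) hℓ hfin M
  have hind : Summable ({p | ℓ p ≤ y}.indicator c) := summable_of_forall_lt_imp_eq_zero hfin
    fun p hp ↦ Set.indicator_of_notMem (s := {p | ℓ p ≤ y}) hp.not_ge c
  refine hsum.tsum_eq ▸ hsum.summable.tsum_le_tsum (fun p ↦ ?_) hind
  by_cases hp : ℓ p ≤ y
  · rw [Set.indicator_of_mem (s := {p | ℓ p ≤ y}) hp]
    exact mul_le_of_le_one_left (hc p) (sub_le_self _ (Real.smoothTransition.nonneg _))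
  · rw [Set.indicator_of_notMem (s := {p | ℓ p ≤ y}) hp,
      Real.smoothTransition.one_of_one_le (by linarith), sub_self, zero_mul]

lemma tsum_indicator_le_sum_range_tsum_unitBump (hℓ : ∀ p, 0 ≤ ℓ p)
    (hfin : ∀ y, {p | ℓ p ≤ y}.Finite) (hc : ∀ p, 0 ≤ c p) (hM : y + 1 ≤ M) :
    ∑' p, {p | ℓ p ≤ y}.indicator c p ≤
      ∑ k ∈ Finset.range M, ∑' p, unitBump (ℓ p - k) * c p := by
  have hsum := hasSum_one_sub_smoothTransition_mul (c := c) hℓ hfin M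
  have hind : Summable ({p | ℓ p ≤ y}.indicator c) := summable_of_forall_lt_imp_eq_zero hfin
    fun p hp ↦ Set.indicator_of_notMem (s := {p | ℓ p ≤ y}) hp.not_ge c
  refine hsum.tsum_eq ▸ hind.tsum_le_tsum (Set.indicator_le' (fun p hp ↦ ?_) fun p _ ↦ ?_)
    hsum.summable
  · have hp : ℓ p ≤ y := hp
    rw [Real.smoothTransition.zero_of_nonpos (by linarith), sub_zero, one_mul]
  · exact mul_nonneg (sub_nonneg.mpr (Real.smoothTransition.le_one _)) (hc p)

theorem abs_tsum_indicator_sub_mul_le (hℓ : ∀ p, 0 ≤ ℓ p) (hfin : ∀ y, {p | ℓ p ≤ y}.Finite)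
    (hc : ∀ p, 0 ≤ c p) {V : ℝ} {ε : ℕ → ℝ} (hε : Summable ε)
    (hV : ∀ k : ℕ, |∑' p, unitBump (ℓ p - k) * c p - V| ≤ ε k) (hy : 0 ≤ y) :
    |∑' p, {p | ℓ p ≤ y}.indicator c p - V * y| ≤ ∑' k, ε k + 2 * |V| := by
  have hsum (M : ℕ) :
      |∑ k ∈ Finset.range M, ∑' p, unitBump (ℓ p - k) * c p - V * M| ≤ ∑' k, ε k :=
    calc _ = |∑ k ∈ Finset.range M, (∑' p, unitBump (ℓ p - k) * c p - V)| := by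
          rw [Finset.sum_sub_distrib, Finset.sum_const, Finset.card_range, nsmul_eq_mul, mul_comm V]
      _ ≤ ∑ k ∈ Finset.range M, ε k :=
          (Finset.abs_sum_le_sum_abs _ _).trans (Finset.sum_le_sum fun k _ ↦ hV k)
      _ ≤ ∑' k, ε k := hε.sum_le_tsum _ fun k _ ↦ (abs_nonneg _).trans (hV k)
  have hfloor := Nat.floor_le hy
  have hlt_floor := Nat.lt_floor_add_one y
  have hlow := sum_range_tsum_unitBump_le_tsum_indicator hℓ hfin hc hfloor
  have hhigh := tsum_indicator_le_sum_range_tsum_unitBump (y := y) (M := ⌊y⌋₊ + 2) hℓ hfin hc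
    (by push_cast; linarith)
  have hVlow : V * (y - ⌊y⌋₊) ≤ |V| * 1 := by
    gcongr
    exacts [le_abs_self V, by linarith]
  have hVhigh : V * (⌊y⌋₊ + 2 - y) ≤ |V| * 2 := by
    gcongr
    exacts [by linarith, le_abs_self V, by linarith]
  have hsum_low := abs_le.mp (hsum ⌊y⌋₊)
  have hsum_high := abs_le.mp (hsum (⌊y⌋₊ + 2))
  push_cast at hsum_high
  rw [abs_le]
  constructor <;> linarith [abs_nonneg V]

end Telescoping

section LogDensity

open Filter Topology Asymptotics

lemma tendsto_log_natCast_atTop : Tendsto (fun M : ℕ ↦ Real.log M) atTop atTop :=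
  Real.tendsto_log_atTop.comp tendsto_natCast_atTop_atTop

lemma tendsto_div_log_of_abs_sub_le {S : ℕ → ℝ} {V E : ℝ}
    (hS : ∀ M : ℕ, 1 ≤ M → |S M - V * Real.log M| ≤ E) :
    Tendsto (fun M ↦ S M / Real.log M) atTop (𝓝 V) := by
  have herr : Tendsto (fun M : ℕ ↦ (S M - V * Real.log M) / Real.log M) atTop (𝓝 0) :=
    tendsto_bdd_div_atTop_nhds_zero (b := -E) (B := E)
      (eventually_atTop.mpr ⟨1, fun M hM ↦ (abs_le.mp (hS M hM)).1⟩)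
      (eventually_atTop.mpr ⟨1, fun M hM ↦ (abs_le.mp (hS M hM)).2⟩) tendsto_log_natCast_atTop
  refine (zero_add V ▸ herr.add_const V).congr' ?_
  filter_upwards [tendsto_log_natCast_atTop.eventually_gt_atTop 0] with M hM
  field_simp
  ring

lemma tendsto_harmonic_div_log : Tendsto (fun M : ℕ ↦ (harmonic M : ℝ) / Real.log M) atTop (𝓝 1) :=
  tendsto_div_log_of_abs_sub_le (E := 1) fun M hM ↦ by
    have hlog : Real.log M ≤ Real.log ↑(M + 1) := Real.log_le_log (mod_cast hM) (by simp)
    rw [one_mul, abs_le]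
    constructor <;> linarith [log_add_one_le_harmonic M, harmonic_le_one_add_log M]

lemma tendsto_sum_range_div_log {b : ℕ → ℝ} {κ : ℝ} (hb : Tendsto b atTop (𝓝 κ)) :
    Tendsto (fun M : ℕ ↦ (∑ m ∈ Finset.range M, b m * ((m : ℝ) + 1)⁻¹) / Real.log M) atTop
      (𝓝 κ) := by
  have hharm (M : ℕ) : ∑ m ∈ Finset.range M, ((m : ℝ) + 1)⁻¹ = harmonic M := by simp [harmonic]
  have hharm_atTop : Tendsto (fun M : ℕ ↦ (harmonic M : ℝ)) atTop atTop := by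
    simpa only [← hharm, one_div] using Real.tendsto_sum_range_one_div_nat_succ_atTop
  have hlittle : (fun m : ℕ ↦ (b m - κ) * ((m : ℝ) + 1)⁻¹) =o[atTop]
      fun m : ℕ ↦ ((m : ℝ) + 1)⁻¹ := by
    have hsub : (fun m ↦ b m - κ) =o[atTop] fun _ ↦ (1 : ℝ) := by
      simpa using hb.sub_const κ
    simpa only [one_mul] using hsub.mul_isBigO (isBigO_refl _ _)
  have hsum := hlittle.sum_range (fun m ↦ by positivity) (by simpa only [hharm] using hharm_atTop)
  simp only [hharm] at hsum
  have := (hsum.tendsto_div_nhds_zero.add_const κ).mul tendsto_harmonic_div_log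
  rw [zero_add, mul_one] at this
  refine this.congr' ?_
  filter_upwards [hharm_atTop.eventually_gt_atTop 0] with M hM
  simp only [sub_mul, Finset.sum_sub_distrib, ← Finset.mul_sum, hharm]
  field_simp
  ring

variable {P : Type*} {N : P → ℕ}

lemma ncard_le_eq_sum_ite (hfin : ∀ m, {p | N p ≤ m}.Finite) {m M : ℕ} (hm : m ≤ M) :
    ({p | N p ≤ m}.ncard : ℝ) = ∑ p ∈ (hfin M).toFinset, if N p ≤ m then 1 else 0 := by
  have hsub : {p | N p ≤ m} = ((hfin M).toFinset.filter (N · ≤ m) : Set P) := by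
    ext p
    simpa using fun h : N p ≤ m ↦ h.trans hm
  rw [hsub, Set.ncard_coe_finset, Finset.sum_boole]

lemma sum_range_ite_le_inv_mul_inv {n M : ℕ} (hn : n ≠ 0) (hM : n ≤ M) :
    ∑ m ∈ Finset.range M, (if n ≤ m then (m : ℝ)⁻¹ * ((m : ℝ) + 1)⁻¹ else 0) =
      (n : ℝ)⁻¹ - (M : ℝ)⁻¹ := by
  induction M, hM using Nat.le_induction with
  | base =>
    rw [sub_self]
    exact Finset.sum_eq_zero fun m hm ↦ if_neg (Finset.mem_range.mp hm).not_ge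
  | succ M hM ih =>
    have : (M : ℝ) ≠ 0 := by norm_cast; lia
    rw [Finset.sum_range_succ, ih, if_pos hM]
    push_cast
    field_simp
    ring

lemma tsum_indicator_inv_eq_sum_range_ncard (hN : ∀ p, N p ≠ 0) (hfin : ∀ m, {p | N p ≤ m}.Finite)
    (M : ℕ) :
    ∑' p, {p | N p ≤ M}.indicator (fun p ↦ (N p : ℝ)⁻¹) p =
      {p | N p ≤ M}.ncard / M +
        ∑ m ∈ Finset.range M, ({p | N p ≤ m}.ncard / m : ℝ) * ((m : ℝ) + 1)⁻¹ := by
  have hswap : ∑ m ∈ Finset.range M, ({p | N p ≤ m}.ncard / m : ℝ) * ((m : ℝ) + 1)⁻¹ =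
      ∑ p ∈ (hfin M).toFinset, ((N p : ℝ)⁻¹ - (M : ℝ)⁻¹) := by
    calc _ = ∑ m ∈ Finset.range M, ∑ p ∈ (hfin M).toFinset,
          (if N p ≤ m then (m : ℝ)⁻¹ * ((m : ℝ) + 1)⁻¹ else 0) := by
          refine Finset.sum_congr rfl fun m hm ↦ ?_
          rw [ncard_le_eq_sum_ite hfin (Finset.mem_range.mp hm).le, div_eq_mul_inv, mul_assoc,
            Finset.sum_mul]
          simp only [ite_mul, one_mul, zero_mul]
      _ = _ := by
          rw [Finset.sum_comm]
          exact Finset.sum_congr rfl fun p hp ↦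
            sum_range_ite_le_inv_mul_inv (hN p) (by simpa using hp)
  rw [hswap, Finset.sum_sub_distrib, Finset.sum_const, nsmul_eq_mul, ← div_eq_mul_inv,
    Set.ncard_eq_toFinset_card _ (hfin M), add_sub_cancel, ← tsum_subtype, ← Finset.tsum_subtype',
    Set.Finite.coe_toFinset]

theorem tendsto_tsum_indicator_inv_div_log (hN : ∀ p, N p ≠ 0) (hfin : ∀ m, {p | N p ≤ m}.Finite)
    {κ : ℝ} (hκ : Tendsto (fun m : ℕ ↦ ({p | N p ≤ m}.ncard / m : ℝ)) atTop (𝓝 κ)) :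
    Tendsto (fun M : ℕ ↦ (∑' p, {p | N p ≤ M}.indicator (fun p ↦ (N p : ℝ)⁻¹) p) / Real.log M)
      atTop (𝓝 κ) := by
  simp only [tsum_indicator_inv_eq_sum_range_ncard hN hfin, add_div]
  simpa only [zero_add] using
    (hκ.div_atTop tendsto_log_natCast_atTop).add (tendsto_sum_range_div_log hκ)

end LogDensity

section Fiber

lemma hasSum_comp_snd {α β : Type*} [Finite α] {f : β → ℝ} {s : ℝ} (hf : HasSum f s) :
    HasSum (fun p : α × β ↦ f p.2) (Nat.card α * s) := by
  have := Fintype.ofFinite α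
  have hα : HasSum (fun _ : α ↦ (1 : ℝ)) (Nat.card α) := by
    simpa using hasSum_fintype fun _ : α ↦ (1 : ℝ)
  simpa only [one_mul] using
    hα.mul hf (summable_mul_of_summable_norm hα.summable.norm hf.summable.norm)

lemma tsum_comp_eq_tsum_card_fiber_mul {P β : Type*} {N : P → β} (hfin : ∀ n, {p | N p = n}.Finite)
    {g : β → ℝ} (hg : ∀ n, 0 ≤ g n) :
    ∑' p, g (N p) = ∑' n, (Nat.card {p // N p = n} : ℝ) * g n := by
  have hcard (n : β) : ∑' p : N ⁻¹' {n}, ENNReal.ofReal (g (N p)) =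
      ENNReal.ofReal (Nat.card {p // N p = n} * g n) := by
    have : Finite (N ⁻¹' {n}) := (hfin n).to_subtype
    have hconst (p : N ⁻¹' {n}) : ENNReal.ofReal (g (N p)) = ENNReal.ofReal (g n) := by
      rw [show N p = n from p.2]
    rw [tsum_congr hconst, ENNReal.tsum_const, ENNReal.ofReal_mul (by positivity),
      ENNReal.ofReal_natCast, ENat.card_eq_coe_natCard]
    rfl
  calc ∑' p, g (N p) = (∑' p, ENNReal.ofReal (g (N p))).toReal := by
        simp only [ENNReal.tsum_toReal_eq fun _ ↦ ENNReal.ofReal_ne_top,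
          ENNReal.toReal_ofReal (hg _)]
    _ = (∑' n, ENNReal.ofReal (Nat.card {p // N p = n} * g n)).toReal := by
        simp only [← ENNReal.tsum_fiberwise _ N, hcard]
    _ = ∑' n, (Nat.card {p // N p = n} : ℝ) * g n := by
        simp only [ENNReal.tsum_toReal_eq fun _ ↦ ENNReal.ofReal_ne_top,
          ENNReal.toReal_ofReal (mul_nonneg (Nat.cast_nonneg _) (hg _))]

end Fiber

section NumberFieldUnits

open NumberField.InfinitePlace NumberField.mixedEmbedding NumberField.mixedEmbedding.fundamentalCone
  NumberField.Units.dirichletUnitTheorem Module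
open NumberField.Units hiding equivFinRank

section LogCoord

variable {K : Type*} [Field K] [NumberField K]

/-- Coordinates of the logarithmic embedding in the basis given by the diagonal vector, at the
distinguished place `w₀`, and a fundamental system of units, at the other places. The values at
points of norm zero are junk. -/
noncomputable def logCoord (x : mixedSpace K) : realSpace K :=
  expMapBasis.symm (normAtAllPlaces x)

lemma logCoord_eq_of_expMapBasis_eq {x : mixedSpace K} {c : realSpace K}
    (h : expMapBasis c = normAtAllPlaces x) : logCoord x = c := by
  rw [logCoord, ← h, expMapBasis.left_inv (by simp [expMapBasis_source])]

lemma expMapBasis_logCoord {x : mixedSpace K} (hx : mixedEmbedding.norm x ≠ 0) :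
    expMapBasis (logCoord x) = normAtAllPlaces x := by
  refine expMapBasis.right_inv ?_
  have hpos (w : InfinitePlace K) : 0 < normAtPlace w x :=
    (mixedEmbedding.norm_ne_zero_iff.mp hx w).lt_of_le' (normAtPlace_nonneg w x)
  simpa [expMapBasis, expMap_target] using hpos

lemma expMapBasis_add (c d : realSpace K) :
    expMapBasis (c + d) = expMapBasis c * expMapBasis d := by
  rw [expMapBasis_apply, map_add, expMap_add]
  rfl

lemma expMapBasis_single_w₀ [DecidableEq (InfinitePlace K)] (s : ℝ) :
    expMapBasis (Pi.single w₀ s) = fun _ : InfinitePlace K ↦ Real.exp s := by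
  ext w
  rw [expMapBasis_apply', Pi.single_eq_same, Pi.smul_apply, smul_eq_mul,
    Finset.prod_eq_one fun i _ ↦ by rw [Pi.single_eq_of_ne i.2, Real.rpow_zero], mul_one]

lemma logCoord_mul {x y : mixedSpace K} (hx : mixedEmbedding.norm x ≠ 0)
    (hy : mixedEmbedding.norm y ≠ 0) : logCoord (x * y) = logCoord x + logCoord y := by
  refine logCoord_eq_of_expMapBasis_eq ?_
  rw [expMapBasis_add, expMapBasis_logCoord hx, expMapBasis_logCoord hy]
  exact funext fun w ↦ (map_mul (normAtPlace w) x y).symm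

lemma logCoord_smul [DecidableEq (InfinitePlace K)] {x : mixedSpace K}
    (hx : mixedEmbedding.norm x ≠ 0) {t : ℝ} (ht : 0 < t) :
    logCoord (t • x) = Pi.single w₀ (Real.log t) + logCoord x := by
  refine logCoord_eq_of_expMapBasis_eq (funext fun w ↦ ?_)
  rw [expMapBasis_add, expMapBasis_single_w₀, expMapBasis_logCoord hx, Real.exp_log ht,
    normAtAllPlaces_apply, normAtPlace_smul, abs_of_pos ht]
  rfl

lemma finrank_mul_logCoord_w₀ {x : mixedSpace K} (hx : mixedEmbedding.norm x ≠ 0) :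
    finrank ℚ K * logCoord x w₀ = Real.log (mixedEmbedding.norm x) := by
  rw [← norm_normAtAllPlaces x, ← expMapBasis_logCoord hx, norm_expMapBasis,
    Real.log_pow, Real.log_exp]

lemma logCoord_torsion_mul_prod_fundSystem (ζ : torsion K) (e : Fin (rank K) → ℤ)
    (i : Fin (rank K)) :
    logCoord (mixedEmbedding K ((ζ * ∏ i, fundSystem K i ^ e i : (𝓞 K)ˣ) : K))
      (equivFinRank i).1 = e i := by
  classical
  have hne (i : Fin (rank K)) : (equivFinRank i).1 ≠ w₀ := (equivFinRank i).2
  let c : realSpace K := fun w ↦ if h : w = w₀ then 0 else e (equivFinRank.symm ⟨w, h⟩)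
  suffices hc : expMapBasis c =
      normAtAllPlaces (mixedEmbedding K ((ζ * ∏ i, fundSystem K i ^ e i : (𝓞 K)ˣ) : K)) by
    rw [logCoord_eq_of_expMapBasis_eq hc]
    simp [c, hne]
  ext w
  have hζ : w ((ζ : (𝓞 K)ˣ) : K) = 1 := (mem_torsion K).mp ζ.2 w
  have hη : ((∏ i, fundSystem K i ^ e i : (𝓞 K)ˣ) : K) = ∏ i, (fundSystem K i : K) ^ e i := by
    simp only [Units.coe_prod, map_prod, coe_zpow]
  rw [normAtAllPlaces_mixedEmbedding, coe_mul, map_mul, hζ, one_mul, hη, expMapBasis_apply',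
    Pi.smul_apply, ← Equiv.prod_comp equivFinRank]
  simp [c, hne]

end LogCoord

section TestFunction

variable {K : Type*} [Field K] [NumberField K]

/-- The test function whose sum over the orbit of `x` under the units is, up to the order of the
torsion, `unitBump (log N) / N` with `N` the norm of `x`. It vanishes at points of norm zero by
the convention `y / 0 = 0`. -/
noncomputable def testFunction (x : mixedSpace K) : ℝ :=
  unitBump (Real.log (mixedEmbedding.norm x)) / mixedEmbedding.norm x *
    ∏ i : Fin (rank K), unitBump (logCoord x (equivFinRank i).1)

lemma norm_ne_zero_of_testFunction_ne_zero {x : mixedSpace K} (hx : testFunction x ≠ 0) :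
    mixedEmbedding.norm x ≠ 0 := by
  rintro h
  simp [testFunction, h] at hx

lemma norm_logCoord_le_one_of_testFunction_ne_zero {x : mixedSpace K}
    (hx : testFunction x ≠ 0) : ‖logCoord x‖ ≤ 1 := by
  have hN := norm_ne_zero_of_testFunction_ne_zero hx
  obtain ⟨⟨hnorm, -⟩, hunit⟩ := by
    simpa only [testFunction, mul_ne_zero_iff, div_ne_zero_iff, Finset.prod_ne_zero_iff,
      Finset.mem_univ, true_imp_iff] using hx
  rw [pi_norm_le_iff_of_nonneg zero_le_one]
  intro w
  rw [Real.norm_eq_abs]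
  by_contra! hlt
  by_cases hw : w = w₀
  · subst hw
    refine hnorm (unitBump_eq_zero ?_)
    rw [← finrank_mul_logCoord_w₀ hN, abs_mul, Nat.abs_cast]
    exact one_le_mul_of_one_le_of_one_le (mod_cast finrank_pos) hlt.le
  · exact hunit (equivFinRank.symm ⟨w, hw⟩) (unitBump_eq_zero (by simpa using hlt.le))

variable (K) in
lemma exists_isCompact_support_testFunction_subset : ∃ S : Set (mixedSpace K), IsCompact S ∧
    (∀ x ∈ S, mixedEmbedding.norm x ≠ 0) ∧ Function.support testFunction ⊆ S := by
  classical
  have hT : IsCompact (expMapBasis '' Metric.closedBall (0 : realSpace K) 1) :=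
    (isCompact_closedBall _ _).image (continuous_expMapBasis K)
  obtain ⟨B, hB⟩ := hT.isBounded.exists_norm_le
  refine ⟨normAtAllPlaces ⁻¹' (expMapBasis '' Metric.closedBall 0 1),
    Metric.isCompact_of_isClosed_isBounded (hT.isClosed.preimage (continuous_normAtAllPlaces K))
      (isBounded_iff_forall_norm_le.mpr ⟨B, ?_⟩), ?_, ?_⟩
  · intro x hx
    rw [norm_eq_sup'_normAtPlace]
    refine Finset.sup'_le _ _ fun w _ ↦ ?_
    exact (le_abs_self _).trans ((norm_le_pi_norm (normAtAllPlaces x) w).trans (hB _ hx))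
  · rintro x ⟨c, -, hc⟩
    rw [← norm_normAtAllPlaces, ← hc]
    exact norm_expMapBasis_ne_zero c
  · intro x hx
    exact ⟨logCoord x, by simpa using norm_logCoord_le_one_of_testFunction_ne_zero hx,
      expMapBasis_logCoord (norm_ne_zero_of_testFunction_ne_zero hx)⟩

variable (K) in
lemma hasCompactSupport_testFunction : HasCompactSupport (testFunction (K := K)) := by
  obtain ⟨S, hS, -, hsub⟩ := exists_isCompact_support_testFunction_subset K
  exact .of_support_subset_isCompact hS hsub

open scoped Classical in
lemma contDiffAt_normAtPlace {n : WithTop ℕ∞} {w : InfinitePlace K} {x : mixedSpace K}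
    (hx : normAtPlace w x ≠ 0) : ContDiffAt ℝ n (normAtPlace w) x := by
  rcases isReal_or_isComplex w with hw | hw
  · have hcoord : ContDiffAt ℝ n (fun y : mixedSpace K ↦ y.1 ⟨w, hw⟩) x := by fun_prop
    have heq : ⇑(normAtPlace w) = fun y : mixedSpace K ↦ ‖y.1 ⟨w, hw⟩‖ :=
      funext fun y ↦ normAtPlace_apply_of_isReal hw y
    rw [heq] at hx ⊢
    exact hcoord.norm ℝ (norm_ne_zero_iff.mp hx)
  · have hcoord : ContDiffAt ℝ n (fun y : mixedSpace K ↦ y.2 ⟨w, hw⟩) x := by fun_prop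
    have heq : ⇑(normAtPlace w) = fun y : mixedSpace K ↦ ‖y.2 ⟨w, hw⟩‖ :=
      funext fun y ↦ normAtPlace_apply_of_isComplex hw y
    rw [heq] at hx ⊢
    exact hcoord.norm ℝ (norm_ne_zero_iff.mp hx)

open scoped Classical in
lemma contDiffAt_mixedEmbedding_norm {n : WithTop ℕ∞} {x : mixedSpace K}
    (hx : mixedEmbedding.norm x ≠ 0) : ContDiffAt ℝ n (mixedEmbedding.norm : mixedSpace K → ℝ) x :=
  contDiffAt_prod fun w _ ↦ (contDiffAt_normAtPlace (mixedEmbedding.norm_ne_zero_iff.mp hx w)).pow _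

open scoped Classical in
lemma contDiffAt_logCoord {n : WithTop ℕ∞} {x : mixedSpace K} (hx : mixedEmbedding.norm x ≠ 0) :
    ContDiffAt ℝ n (logCoord : mixedSpace K → realSpace K) x := by
  have hw := mixedEmbedding.norm_ne_zero_iff.mp hx
  refine (completeBasis K).equivFunL.contDiff.contDiffAt.comp x (contDiffAt_pi.mpr fun w ↦ ?_)
  exact contDiffAt_const.mul ((contDiffAt_normAtPlace (hw w)).log (hw w))

variable (K) in
open scoped Classical in
lemma contDiff_testFunction : ContDiff ℝ 1 (testFunction (K := K)) := by
  refine contDiff_iff_contDiffAt.mpr fun x ↦ ?_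
  by_cases hx : mixedEmbedding.norm x = 0
  · obtain ⟨S, hS, hnorm, hsub⟩ := exists_isCompact_support_testFunction_subset K
    refine contDiffAt_const (c := 0) |>.congr_of_eventuallyEq ?_
    filter_upwards [hS.isClosed.isOpen_compl.mem_nhds fun hmem ↦ hnorm x hmem hx] with y hy
    exact Function.notMem_support.mp fun hmem ↦ hy (hsub hmem)
  · have hN := contDiffAt_mixedEmbedding_norm (n := 1) hx
    have hbump {f : mixedSpace K → ℝ} (hf : ContDiffAt ℝ 1 f x) :
        ContDiffAt ℝ 1 (fun y ↦ unitBump (f y)) x := contDiff_unitBump.contDiffAt.comp x hf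
    exact ((hbump (hN.log hx)).div hN hx).mul <| contDiffAt_prod fun i _ ↦
      hbump (contDiffAt_pi.mp (contDiffAt_logCoord hx) _)

end TestFunction

section PrincipalIdeal

/-- The nonzero principal ideals of a ring. -/
abbrev NonzeroPrincipalIdeal (R : Type*) [CommRing R] :=
  {I : Ideal R // I ≠ ⊥ ∧ I.IsPrincipal}

variable {R : Type*} [CommRing R] [IsDomain R]

lemma hasSum_nonzeroPrincipalIdeal {f : R → ℝ} (hf : Summable f) (hf0 : f 0 = 0)
    {g : Ideal R → ℝ} (hg : ∀ a ≠ 0, HasSum (fun u : Rˣ ↦ f (u * a)) (g (Ideal.span {a}))) :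
    HasSum (fun I : NonzeroPrincipalIdeal R ↦ g I) (∑' a, f a) := by
  have hex (I : NonzeroPrincipalIdeal R) : ∃ a, Ideal.span {a} = I.1 :=
    I.2.2.principal.imp fun _ h ↦ h.symm
  choose gen hgen using hex
  have hgen0 (I : NonzeroPrincipalIdeal R) : gen I ≠ 0 := fun h ↦
    I.2.1 (by rw [← hgen I, h, Ideal.span_singleton_zero])
  have inj : Function.Injective (fun p : NonzeroPrincipalIdeal R × Rˣ ↦ (p.2 : R) * gen p.1) := by
    rintro ⟨I, u⟩ ⟨J, v⟩ (h : (u : R) * gen I = v * gen J)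
    obtain rfl : I = J := Subtype.ext <| by
      rw [← hgen I, ← hgen J, ← Ideal.span_singleton_mul_left_unit u.isUnit, h,
        Ideal.span_singleton_mul_left_unit v.isUnit]
    rw [Units.ext (mul_right_cancel₀ (hgen0 I) h)]
  have zero_off_range : ∀ a ∉ Set.range (fun p : NonzeroPrincipalIdeal R × Rˣ ↦ p.2 * gen p.1),
      f a = 0 := by
    intro a ha
    by_contra hfa
    have ha0 : a ≠ 0 := fun h ↦ hfa (h ▸ hf0)
    let I : NonzeroPrincipalIdeal R := ⟨Ideal.span {a}, by simpa using ha0, ⟨a, rfl⟩⟩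
    obtain ⟨u, hu⟩ := Ideal.span_singleton_eq_span_singleton.mp (hgen I)
    exact ha ⟨(I, u), (mul_comm _ _).trans hu⟩
  refine ((inj.hasSum_iff zero_off_range).mpr hf.hasSum).prod_fiberwise fun I ↦ ?_
  rw [← hgen I]
  exact hg (gen I) (hgen0 I)

end PrincipalIdeal

section RingOfIntegers

open MeasureTheory

variable {K : Type*} [Field K] [NumberField K]

variable (K) in
/-- The lattice spanned by `latticeBasis K` is the image of the ring of integers. -/
noncomputable def ringOfIntegersEquivLattice :
    𝓞 K ≃ (Submodule.span ℤ (Set.range (latticeBasis K))).toAddSubgroup :=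
  Equiv.ofBijective (fun a ↦ ⟨mixedEmbedding K a, (mem_span_latticeBasis K).mpr ⟨a, rfl⟩⟩)
    ⟨fun _ _ h ↦ RingOfIntegers.ext (mixedEmbedding_injective K (congrArg Subtype.val h)),
      fun v ↦ ((mem_span_latticeBasis K).mp v.2).imp fun _ h ↦ Subtype.ext h⟩

open scoped Classical in
lemma exists_forall_abs_ringOfIntegersSum_sub_le {φ : mixedSpace K → ℝ} (hφ : ContDiff ℝ 1 φ)
    (hsupp : HasCompactSupport φ) :
    ∃ V D, ∀ t : ℝ, 1 ≤ t → Summable (fun a : 𝓞 K ↦ φ (t⁻¹ • mixedEmbedding K a)) ∧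
      |(t ^ finrank ℚ K)⁻¹ * ∑' a : 𝓞 K, φ (t⁻¹ • mixedEmbedding K a) - V| ≤ D / t := by
  obtain ⟨C, hC⟩ := hφ.lipschitzWith_of_hasCompactSupport hsupp one_ne_zero
  let L := (Submodule.span ℤ (Set.range (latticeBasis K))).toAddSubgroup
  have : Countable L := inferInstanceAs (Countable (Submodule.span ℤ (Set.range (latticeBasis K))))
  obtain ⟨D, hD⟩ := exists_forall_abs_latticeSum_sub_integral_le (L := L)
    (ZSpan.isAddFundamentalDomain' (latticeBasis K) volume)
    (ZSpan.fundamentalDomain_measurableSet _) (ZSpan.fundamentalDomain_isBounded _) hC hsupp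
  refine ⟨(volume.real (ZSpan.fundamentalDomain (latticeBasis K)))⁻¹ * ∫ x, φ x, D, fun t ht ↦ ?_⟩
  obtain ⟨hsum, hle⟩ := hD t ht
  rw [← (ringOfIntegersEquivLattice K).summable_iff] at hsum
  rw [← (ringOfIntegersEquivLattice K).tsum_eq, mixedEmbedding.finrank] at hle
  exact ⟨hsum, hle⟩

lemma norm_mixedEmbedding_coe (a : 𝓞 K) :
    mixedEmbedding.norm (mixedEmbedding K a) = Ideal.absNorm (Ideal.span {a}) := by
  rw [mixedEmbedding.norm_eq_norm, Ideal.absNorm_span_singleton, ← Algebra.coe_norm_int]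
  push_cast
  simp

variable (K) in
/-- Dirichlet's unit theorem as a bijection. -/
noncomputable def torsionProdEquivUnits : torsion K × (Fin (rank K) → ℤ) ≃ (𝓞 K)ˣ :=
  Equiv.ofBijective (fun p ↦ p.1 * ∏ i, fundSystem K i ^ p.2 i) <|
    Function.bijective_iff_existsUnique _ |>.mpr fun u ↦ by
      simpa only [eq_comm] using exist_unique_eq_mul_prod K u

/-- The weight `1 / N(I)`, smoothly localized to the ideals with `|log N(I) - y| ≤ 1`. -/
noncomputable def bumpWeight (y : ℝ) (I : Ideal (𝓞 K)) : ℝ :=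
  unitBump (Real.log (Ideal.absNorm I) - y) * (Ideal.absNorm I : ℝ)⁻¹

lemma testFunction_inv_smul_units_mul {a : 𝓞 K} (ha : a ≠ 0) {t : ℝ} (ht : 0 < t)
    (p : torsion K × (Fin (rank K) → ℤ)) :
    testFunction (t⁻¹ • mixedEmbedding K ((torsionProdEquivUnits K p * a : 𝓞 K) : K)) =
      t ^ finrank ℚ K * bumpWeight (finrank ℚ K * Real.log t) (Ideal.span {a}) *
        ∏ i, unitBump (logCoord (mixedEmbedding K a) (equivFinRank i).1 + p.2 i) := by
  classical
  set u : (𝓞 K)ˣ := torsionProdEquivUnits K p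
  have ha' : mixedEmbedding.norm (mixedEmbedding K (a : K)) ≠ 0 := by
    simpa [norm_mixedEmbedding_coe]
  have hmul : mixedEmbedding K ((u * a : 𝓞 K) : K) = mixedEmbedding K u * mixedEmbedding K a :=
    map_mul (mixedEmbedding K) (u : K) (a : K)
  have hnorm_u : mixedEmbedding.norm (mixedEmbedding K ((u : 𝓞 K) : K)) = 1 := norm_unit u
  have hnorm : mixedEmbedding.norm (t⁻¹ • mixedEmbedding K ((u * a : 𝓞 K) : K)) =
      (t ^ finrank ℚ K)⁻¹ * Ideal.absNorm (Ideal.span {a}) := by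
    rw [mixedEmbedding.norm_smul, abs_of_pos (inv_pos.mpr ht), inv_pow, hmul, map_mul, hnorm_u,
      one_mul, norm_mixedEmbedding_coe]
  have hcoord (i : Fin (rank K)) :
      logCoord (t⁻¹ • mixedEmbedding K ((u * a : 𝓞 K) : K)) (equivFinRank i).1 =
        logCoord (mixedEmbedding K a) (equivFinRank i).1 + p.2 i := by
    have hu' : mixedEmbedding.norm (mixedEmbedding K ((u : 𝓞 K) : K)) ≠ 0 := by simp [hnorm_u]
    rw [hmul, logCoord_smul (by rw [map_mul]; exact mul_ne_zero hu' ha') (inv_pos.mpr ht),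
      logCoord_mul hu' ha', Pi.add_apply, Pi.add_apply, Pi.single_eq_of_ne (equivFinRank i).2,
      zero_add, add_comm]
    congr 1
    exact logCoord_torsion_mul_prod_fundSystem p.1 p.2 i
  have hN : (Ideal.absNorm (Ideal.span {a}) : ℝ) ≠ 0 := norm_mixedEmbedding_coe a ▸ ha'
  rw [testFunction, bumpWeight, hnorm, Real.log_mul (by positivity) hN, Real.log_inv, Real.log_pow,
    neg_add_eq_sub]
  simp only [hcoord]
  field_simp

lemma hasSum_units_testFunction {a : 𝓞 K} (ha : a ≠ 0) {t : ℝ} (ht : 0 < t) :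
    HasSum (fun u : (𝓞 K)ˣ ↦ testFunction (t⁻¹ • mixedEmbedding K ((u * a : 𝓞 K) : K)))
      (t ^ finrank ℚ K * torsionOrder K *
        bumpWeight (finrank ℚ K * Real.log t) (Ideal.span {a})) := by
  rw [← (torsionProdEquivUnits K).hasSum_iff]
  have h := (hasSum_comp_snd (α := torsion K) (hasSum_prod_unitBump_add_intCast
    fun i ↦ logCoord (mixedEmbedding K a) (equivFinRank i).1)).mul_left
      (t ^ finrank ℚ K * bumpWeight (finrank ℚ K * Real.log t) (Ideal.span {a}))
  rw [mul_one, mul_right_comm] at h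
  exact h.congr_fun fun p ↦ testFunction_inv_smul_units_mul ha ht p

variable (K) in
theorem exists_forall_abs_tsum_bumpWeight_sub_le :
    ∃ V D, ∀ y : ℝ, 0 ≤ y → |∑' I : NonzeroPrincipalIdeal (𝓞 K), bumpWeight y I.1 - V| ≤
      D * Real.exp (-y / finrank ℚ K) := by
  obtain ⟨V, D, h⟩ := exists_forall_abs_ringOfIntegersSum_sub_le (contDiff_testFunction K)
    (hasCompactSupport_testFunction K)
  have hw : (0 : ℝ) < torsionOrder K := mod_cast torsionOrder_pos K
  have hn : (0 : ℝ) < finrank ℚ K := mod_cast finrank_pos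
  refine ⟨V / torsionOrder K, D / torsionOrder K, fun y hy ↦ ?_⟩
  set t := Real.exp (y / finrank ℚ K) with ht
  have hlog : finrank ℚ K * Real.log t = y := by rw [ht, Real.log_exp, mul_div_cancel₀ _ hn.ne']
  obtain ⟨hsum, hle⟩ := h t (Real.one_le_exp (by positivity))
  have hideal := hasSum_nonzeroPrincipalIdeal hsum (by simp [testFunction])
    (g := fun I ↦ t ^ finrank ℚ K * torsionOrder K * bumpWeight (finrank ℚ K * Real.log t) I)
    fun a ha ↦ hasSum_units_testFunction ha (Real.exp_pos _)
  rw [← hideal.tsum_eq, tsum_mul_left, mul_assoc, inv_mul_cancel_left₀ (by positivity), hlog] at hle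
  rw [neg_div, Real.exp_neg, ← ht, ← div_eq_mul_inv, div_right_comm, le_div_iff₀ hw]
  nth_rewrite 2 [← abs_of_pos hw]
  rwa [← abs_mul, sub_mul, div_mul_cancel₀ _ hw.ne', mul_comm (tsum _)]

end RingOfIntegers

section PrincipalIdealSum

open Filter Topology

variable (K : Type*) [Field K] [NumberField K]

/-- The sum of `1 / N(I)` over the nonzero principal ideals of norm at most `x`. -/
noncomputable def principalIdealSum (x : ℝ) : ℝ :=
  ∑' I : NonzeroPrincipalIdeal (𝓞 K), {I : NonzeroPrincipalIdeal (𝓞 K) |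
    (Ideal.absNorm I.1 : ℝ) ≤ x}.indicator (fun I ↦ (Ideal.absNorm I.1 : ℝ)⁻¹) I

variable {K} in
lemma absNorm_nonzeroPrincipalIdeal_ne_zero (I : NonzeroPrincipalIdeal (𝓞 K)) :
    Ideal.absNorm I.1 ≠ 0 :=
  Ideal.absNorm_eq_zero_iff.not.mpr I.2.1

lemma finite_nonzeroPrincipalIdeal_absNorm_le (m : ℕ) :
    {I : NonzeroPrincipalIdeal (𝓞 K) | Ideal.absNorm I.1 ≤ m}.Finite :=
  (Ideal.finite_setOfPred_absNorm_le m).preimage Subtype.val_injective.injOn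

lemma exists_forall_abs_principalIdealSum_sub_mul_log_le :
    ∃ V E, ∀ x : ℝ, 1 ≤ x → |principalIdealSum K x - V * Real.log x| ≤ E := by
  obtain ⟨V, D, hVD⟩ := exists_forall_abs_tsum_bumpWeight_sub_le K
  have hN (I : NonzeroPrincipalIdeal (𝓞 K)) : 0 < (Ideal.absNorm I.1 : ℝ) :=
    mod_cast (absNorm_nonzeroPrincipalIdeal_ne_zero I).pos
  have hfin (y : ℝ) : {I : NonzeroPrincipalIdeal (𝓞 K) |
      Real.log (Ideal.absNorm I.1) ≤ y}.Finite :=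
    (finite_nonzeroPrincipalIdeal_absNorm_le K ⌊Real.exp y⌋₊).subset fun I hI ↦
      Nat.le_floor ((Real.log_le_iff_le_exp (hN I)).mp hI)
  have hε : Summable fun k : ℕ ↦ D * Real.exp (-k / finrank ℚ K) := by
    have hn : (0 : ℝ) < finrank ℚ K := mod_cast finrank_pos
    refine .mul_left D ?_
    simpa only [mul_neg, mul_one_div, neg_div] using
      Real.summable_exp_nat_mul_iff.mpr (neg_lt_zero.mpr (one_div_pos.mpr hn))
  refine ⟨V, ∑' k : ℕ, D * Real.exp (-k / finrank ℚ K) + 2 * |V|, fun x hx ↦ ?_⟩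
  have key := abs_tsum_indicator_sub_mul_le (fun I ↦ Real.log_natCast_nonneg _) hfin
    (fun I ↦ (inv_pos.mpr (hN I)).le) hε (fun k ↦ hVD k k.cast_nonneg) (Real.log_nonneg hx)
  simpa only [principalIdealSum, Real.log_le_log_iff (hN _) (one_pos.trans_le hx)] using key

lemma tendsto_ncard_nonzeroPrincipalIdeal_div :
    Tendsto (fun m : ℕ ↦ ({I : NonzeroPrincipalIdeal (𝓞 K) | Ideal.absNorm I.1 ≤ m}.ncard / m : ℝ))
      atTop (𝓝 (dedekindZeta_residue K / classNumber K)) := by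
  have hcard (m : ℕ) : Nat.card {I : nonZeroDivisors (Ideal (𝓞 K)) //
      (Ideal.absNorm (I : Ideal (𝓞 K)) : ℝ) ≤ (m : ℝ) ∧ ClassGroup.mk0 I = 1} =
      {I : NonzeroPrincipalIdeal (𝓞 K) | Ideal.absNorm I.1 ≤ m}.ncard :=
    Nat.card_congr
      { toFun I := ⟨⟨I.1, nonZeroDivisors.ne_zero I.1.2,
          (ClassGroup.mk0_eq_one_iff I.1.2).mp I.2.2⟩, Nat.cast_le.mp I.2.1⟩
        invFun I := ⟨⟨I.1, mem_nonZeroDivisors_of_ne_zero I.1.2.1⟩, Nat.cast_le.mpr I.2,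
          (ClassGroup.mk0_eq_one_iff _).mpr I.1.2.2⟩
        left_inv _ := rfl
        right_inv _ := rfl }
  have hlim := (Ideal.tendsto_norm_le_and_mk_eq_div_atTop K 1).comp tendsto_natCast_atTop_atTop
  have hres : dedekindZeta_residue K / classNumber K = 2 ^ nrRealPlaces K *
      (2 * Real.pi) ^ nrComplexPlaces K * regulator K / (torsionOrder K * √|(discr K : ℝ)|) := by
    have := classNumber_ne_zero K
    rw [dedekindZeta_residue_def]
    field_simp
  rw [hres]
  exact hlim.congr fun m ↦ by rw [Function.comp_apply, hcard]

theorem exists_forall_abs_principalIdealSum_sub_residue_mul_log_le :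
    ∃ E, ∀ x : ℝ, 1 ≤ x →
      |principalIdealSum K x - dedekindZeta_residue K / classNumber K * Real.log x| ≤ E := by
  obtain ⟨V, E, hVE⟩ := exists_forall_abs_principalIdealSum_sub_mul_log_le K
  have hV := tendsto_div_log_of_abs_sub_le fun M hM ↦ hVE M (mod_cast hM)
  have hres := tendsto_tsum_indicator_inv_div_log absNorm_nonzeroPrincipalIdeal_ne_zero
    (finite_nonzeroPrincipalIdeal_absNorm_le K) (tendsto_ncard_nonzeroPrincipalIdeal_div K)
  simp only [principalIdealSum, Nat.cast_le] at hV
  exact ⟨E, tendsto_nhds_unique hV hres ▸ hVE⟩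

open scoped Classical in
lemma finsum_ite_inv_absNorm_eq_principalIdealSum (x : ℝ) :
    (∑ᶠ I : Ideal (𝓞 K), if I ≠ ⊥ ∧ I.IsPrincipal ∧ (Ideal.absNorm I : ℝ) ≤ x
      then (Ideal.absNorm I : ℝ)⁻¹ else 0) = principalIdealSum K x := by
  have hsupp : Function.HasFiniteSupport fun I : Ideal (𝓞 K) ↦
      if I ≠ ⊥ ∧ I.IsPrincipal ∧ (Ideal.absNorm I : ℝ) ≤ x then (Ideal.absNorm I : ℝ)⁻¹ else 0 :=
    (Ideal.finite_setOfPred_absNorm_le ⌊x⌋₊).subset fun I hI ↦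
      Nat.le_floor (ite_ne_right_iff.mp hI).1.2.2
  rw [← tsum_eq_finsum (L := .unconditional _) hsupp]
  calc _ = ∑' I, {I : Ideal (𝓞 K) | I ≠ ⊥ ∧ I.IsPrincipal}.indicator
        (fun I ↦ if (Ideal.absNorm I : ℝ) ≤ x then (Ideal.absNorm I : ℝ)⁻¹ else 0) I := by
        simp only [Set.indicator_apply, Set.mem_ofPred_eq, ← and_assoc, ite_and]
    _ = principalIdealSum K x := (tsum_subtype _ _).symm

end PrincipalIdealSum

section DedekindZeta

open Filter Topology

variable (K : Type*) [Field K] [NumberField K]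

lemma dedekindZeta_ofReal_eq_tsum {s : ℝ} (hs : s ≠ 0) :
    dedekindZeta K s =
      ((∑' I : {I : Ideal (𝓞 K) // I ≠ ⊥}, ((Ideal.absNorm I.1 : ℝ) ^ s)⁻¹ : ℝ) : ℂ) := by
  have hbot : ∑' I : {I : Ideal (𝓞 K) // I ≠ ⊥}, ((Ideal.absNorm I.1 : ℝ) ^ s)⁻¹ =
      ∑' I : Ideal (𝓞 K), ((Ideal.absNorm I : ℝ) ^ s)⁻¹ :=
    tsum_subtype_eq_of_support_subset (s := {I : Ideal (𝓞 K) | I ≠ ⊥})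
      (f := fun I ↦ ((Ideal.absNorm I : ℝ) ^ s)⁻¹) fun I hI h ↦ hI (by simp [h, hs])
  rw [hbot, tsum_comp_eq_tsum_card_fiber_mul Ideal.finite_setOfPred_absNorm_eq
    (g := fun n : ℕ ↦ ((n : ℝ) ^ s)⁻¹) fun n ↦ by positivity, Complex.ofReal_tsum, dedekindZeta,
    LSeries]
  refine tsum_congr fun n ↦ ?_
  rcases eq_or_ne n 0 with rfl | hn
  · simp [hs]
  · rw [LSeries.term_of_ne_zero hn, div_eq_mul_inv]
    push_cast
    rw [Complex.ofReal_cpow n.cast_nonneg]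
    rfl

lemma tendsto_sub_one_mul_tsum_inv_absNorm_rpow :
    Tendsto (fun s : ℝ ↦ (s - 1) *
      ∑' I : {I : Ideal (𝓞 K) // I ≠ ⊥}, ((Ideal.absNorm I.1 : ℝ) ^ s)⁻¹)
      (𝓝[>] 1) (𝓝 (dedekindZeta_residue K)) := by
  rw [← tendsto_ofReal_iff]
  refine (tendsto_sub_one_mul_dedekindZeta_nhdsGT K).congr' ?_
  filter_upwards [self_mem_nhdsWithin] with s hs
  rw [dedekindZeta_ofReal_eq_tsum K (one_pos.trans hs).ne']
  push_cast
  rfl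

end DedekindZeta

end NumberFieldUnits

open Classical in
/-- Let `K` be a number field. There exist constants `C > 0` and `C′ > 0`,
where `C` equals the residue at `s = 1` of the Dedekind zeta function of `K` divided by the
class number `h_K` (the residue being expressed as the limit of `(s−1)·∑_{I ≠ 0} N(I)^{−s}`
as `s → 1⁺`), such that for every real `x ≥ 2`,
`|∑_{I nonzero principal ideal of O_K, N(I) ≤ x} 1/N(I) − C·log x| ≤ C′`. -/
theorem stmt_8 (K : Type*) [Field K] [NumberField K] :
    ∃ C > (0 : ℝ), ∃ C' > (0 : ℝ),
      Filter.Tendsto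
        (fun s : ℝ => (s - 1) *
          ∑' I : {I : Ideal (𝓞 K) // I ≠ ⊥}, ((Ideal.absNorm I.1 : ℝ) ^ s)⁻¹)
        (nhdsWithin 1 (Set.Ioi 1)) (nhds (C * (classNumber K : ℝ))) ∧
      ∀ x : ℝ, 2 ≤ x →
        |(∑ᶠ I : Ideal (𝓞 K),
            if I ≠ ⊥ ∧ I.IsPrincipal ∧ (Ideal.absNorm I : ℝ) ≤ x
            then ((Ideal.absNorm I : ℝ))⁻¹ else 0) - C * Real.log x| ≤ C' := by
  obtain ⟨E, hE⟩ := exists_forall_abs_principalIdealSum_sub_residue_mul_log_le K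
  have hh : (0 : ℝ) < classNumber K := mod_cast classNumber_pos K
  refine ⟨dedekindZeta_residue K / classNumber K, div_pos (dedekindZeta_residue_pos K) hh,
    |E| + 1, by positivity, ?_, fun x hx ↦ ?_⟩
  · rw [div_mul_cancel₀ _ hh.ne']
    exact tendsto_sub_one_mul_tsum_inv_absNorm_rpow K
  · rw [finsum_ite_inv_absNorm_eq_principalIdealSum]
    exact (hE x (by linarith)).trans (by linarith [le_abs_self E])
end

section
/- Let a₀, a₁, a₂ be integers, α = a₀ + a₁r + a₂r² ∈ ℤ[r], and suppose gcd(N(α), B₁₃·Disc(f)) = 1, where N(α) = |det M| and B₁₃, B₂₃ are the indicated cofactors of M evaluated at (a₀, a₁, a₂). Then there exists an integer k with 0 ≤ k < N(α) such that for every integer n, α divides n − r in ℤ[r] if and only if n ≡ k (mod N(α)); moreover B₁₃·k ≡ B₂₃ (mod N(α)). -/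
open Polynomial

/-- The subring `ℤ[r]` of `K` generated by `r`. -/
noncomputable def Zr {K : Type*} [Field K] (r : K) : Subalgebra ℤ K := Algebra.adjoin ℤ {r}

/-- `r` as an element of `ℤ[r]`. -/
noncomputable def rZ {K : Type*} [Field K] (r : K) : Zr r := ⟨r, Algebra.subset_adjoin rfl⟩

/-- The discriminant of the cubic `X³ + c₂X² + c₁X + c₀`. -/
def discF (c₀ c₁ c₂ : ℤ) : ℤ :=
  18 * c₂ * c₁ * c₀ - 4 * c₂ ^ 3 * c₀ + c₂ ^ 2 * c₁ ^ 2 - 4 * c₁ ^ 3 - 27 * c₀ ^ 2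

/-- The matrix of multiplication by `α = a₀ + a₁r + a₂r²` on `ℚ(r)` in the basis `(1, r, r²)`,
where `r³ + c₂r² + c₁r + c₀ = 0`; its determinant is `N_{K/ℚ}(α)`. -/
def Mmat {R : Type*} [CommRing R] (c₀ c₁ c₂ a₀ a₁ a₂ : R) : Matrix (Fin 3) (Fin 3) R :=
  !![a₀, -c₀ * a₂, a₂ * c₀ * c₂ - a₁ * c₀;
     a₁, a₀ - c₁ * a₂, a₂ * c₁ * c₂ - a₂ * c₀ - a₁ * c₁;
     a₂, a₁ - c₂ * a₂, a₂ * c₂ ^ 2 - a₂ * c₁ - a₁ * c₂ + a₀]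

/-- The `(i+1, j+1)` cofactor of a 3×3 matrix (`cof M i j` with 0-based `i, j` is the
cofactor `B_{(i+1)(j+1)}` in 1-based notation). -/
def cof {R : Type*} [CommRing R] (M : Matrix (Fin 3) (Fin 3) R) (i j : Fin 3) : R :=
  (-1 : R) ^ ((i : ℕ) + (j : ℕ)) * (M.submatrix i.succAbove j.succAbove).det

/-!
Write `α = a₀ + a₁r + a₂r²` and `N = det M`. Two elements of `ℤ[r]` are visibly multiples of `α`:
`N` itself, because `(1, r, r²)` is a left eigenvector of `M` with eigenvalue `α`, and
`B₂₃ - B₁₃ r = α (a₂ r + c₂ a₂ - a₁)`. The first one gives `N = α β` with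
`β = B₁₁ + B₁₂ r + B₁₃ r²`, so if `α` divides an integer `m`, then `m β` is a multiple of `N`, and
comparing coefficients of `r²` shows that `N ∣ m B₁₃`, hence `N ∣ m`. As `B₁₃` is
invertible modulo `N`, it is invertible modulo `α`, and therefore
`α ∣ n - r ↔ α ∣ B₁₃ n - B₁₃ r ↔ α ∣ B₁₃ n - B₂₃ ↔ N ∣ B₁₃ n - B₂₃`.
-/

section Cubic

variable {R S : Type*} [CommRing R] [CommRing S] [Algebra R S]

/-- The element `a₀ + a₁r + a₂r²` of an `R`-algebra, for coefficients `a₀, a₁, a₂ : R`. It stands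
for `α` and for its complementary factor in the norm. -/
def quadraticAt (r : S) (a₀ a₁ a₂ : R) : S :=
  algebraMap R S a₀ + algebraMap R S a₁ * r + algebraMap R S a₂ * r ^ 2

theorem cof_eq_adjugate (M : Matrix (Fin 3) (Fin 3) R) (i j : Fin 3) :
    cof M i j = M.adjugate j i :=
  (M.adjugate_fin_succ_eq_det_submatrix j i).symm

theorem powers_vecMul_mapMatrix (r : S) (M : Matrix (Fin 3) (Fin 3) R) (j : Fin 3) :
    Matrix.vecMul ![1, r, r ^ 2] ((algebraMap R S).mapMatrix M) j =
      quadraticAt r (M 0 j) (M 1 j) (M 2 j) := by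
  simp [Matrix.vecMul, dotProduct, Fin.sum_univ_three, quadraticAt, mul_comm]

variable {c₀ c₁ c₂ : R}

theorem cof_Mmat_zero_two (a₀ a₁ a₂ : R) :
    cof (Mmat c₀ c₁ c₂ a₀ a₁ a₂) 0 2 = a₁ * (a₁ - c₂ * a₂) - a₂ * (a₀ - c₁ * a₂) := by
  simp [cof, Mmat, Matrix.det_fin_two, Fin.succAbove, mul_comm]

theorem cof_Mmat_one_two (a₀ a₁ a₂ : R) :
    cof (Mmat c₀ c₁ c₂ a₀ a₁ a₂) 1 2 = -(a₀ * (a₁ - c₂ * a₂) + c₀ * a₂ ^ 2) := by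
  simp [cof, Mmat, Matrix.det_fin_two, Fin.succAbove, pow_succ, mul_assoc, add_comm]

section Root

variable {r : S}

theorem powers_vecMul_Mmat (hr : aeval r (X ^ 3 + C c₂ * X ^ 2 + C c₁ * X + C c₀) = 0)
    (a₀ a₁ a₂ : R) :
    Matrix.vecMul ![1, r, r ^ 2] ((algebraMap R S).mapMatrix (Mmat c₀ c₁ c₂ a₀ a₁ a₂)) =
      quadraticAt r a₀ a₁ a₂ • ![1, r, r ^ 2] := by
  simp only [map_add, map_mul, map_pow, aeval_X, aeval_C] at hr
  set ι := algebraMap R S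
  ext j
  rw [powers_vecMul_mapMatrix]
  fin_cases j
  · change quadraticAt r a₀ a₁ a₂ = quadraticAt r a₀ a₁ a₂ * 1
    rw [mul_one]
  · change quadraticAt r (-c₀ * a₂) (a₀ - c₁ * a₂) (a₁ - c₂ * a₂) = quadraticAt r a₀ a₁ a₂ * r
    simp only [quadraticAt, map_sub, map_mul, map_neg]
    linear_combination -ι a₂ * hr
  · change quadraticAt r (a₂ * c₀ * c₂ - a₁ * c₀) (a₂ * c₁ * c₂ - a₂ * c₀ - a₁ * c₁)
      (a₂ * c₂ ^ 2 - a₂ * c₁ - a₁ * c₂ + a₀) = quadraticAt r a₀ a₁ a₂ * r ^ 2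
    simp only [quadraticAt, map_sub, map_add, map_mul, map_pow]
    linear_combination (ι a₂ * ι c₂ - ι a₁ - ι a₂ * r) * hr

theorem quadraticAt_mul_quadraticAt_cof
    (hr : aeval r (X ^ 3 + C c₂ * X ^ 2 + C c₁ * X + C c₀) = 0) (a₀ a₁ a₂ : R) :
    quadraticAt r a₀ a₁ a₂ * quadraticAt r (cof (Mmat c₀ c₁ c₂ a₀ a₁ a₂) 0 0)
        (cof (Mmat c₀ c₁ c₂ a₀ a₁ a₂) 0 1) (cof (Mmat c₀ c₁ c₂ a₀ a₁ a₂) 0 2) =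
      algebraMap R S (Mmat c₀ c₁ c₂ a₀ a₁ a₂).det := by
  set M := Mmat c₀ c₁ c₂ a₀ a₁ a₂
  set ι := algebraMap R S
  have hadj : quadraticAt r a₀ a₁ a₂ • Matrix.vecMul ![1, r, r ^ 2] (ι.mapMatrix M.adjugate) =
      (ι M.det • ![1, r, r ^ 2] : Fin 3 → S) := by
    rw [← Matrix.smul_vecMul, ← powers_vecMul_Mmat hr, Matrix.vecMul_vecMul, ι.map_adjugate,
      Matrix.mul_adjugate, Matrix.vecMul_smul, Matrix.vecMul_one, ι.map_det]
  calc quadraticAt r a₀ a₁ a₂ * quadraticAt r (cof M 0 0) (cof M 0 1) (cof M 0 2)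
    _ = (quadraticAt r a₀ a₁ a₂ • Matrix.vecMul ![1, r, r ^ 2] (ι.mapMatrix M.adjugate)) 0 := by
      simp only [cof_eq_adjugate, Pi.smul_apply, smul_eq_mul, ι, powers_vecMul_mapMatrix]
    _ = ι M.det * 1 := congrFun hadj 0
    _ = ι M.det := mul_one _

theorem quadraticAt_dvd_cof_sub_cof_mul
    (hr : aeval r (X ^ 3 + C c₂ * X ^ 2 + C c₁ * X + C c₀) = 0) (a₀ a₁ a₂ : R) :
    quadraticAt r a₀ a₁ a₂ ∣ algebraMap R S (cof (Mmat c₀ c₁ c₂ a₀ a₁ a₂) 1 2) -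
      algebraMap R S (cof (Mmat c₀ c₁ c₂ a₀ a₁ a₂) 0 2) * r := by
  refine ⟨algebraMap R S a₂ * r + algebraMap R S (c₂ * a₂ - a₁), ?_⟩
  simp only [map_add, map_mul, map_pow, aeval_X, aeval_C] at hr
  simp only [cof_Mmat_zero_two, cof_Mmat_one_two, quadraticAt, map_add, map_sub, map_neg, map_mul,
    map_pow]
  linear_combination -algebraMap R S a₂ ^ 2 * hr

end Root

theorem coeff_quadraticAt (h : IsAdjoinRootMonic S (X ^ 3 + C c₂ * X ^ 2 + C c₁ * X + C c₀))
    (a₀ a₁ a₂ : R) :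
    h.coeff (quadraticAt h.root a₀ a₁ a₂) = Pi.single 0 a₀ + Pi.single 1 a₁ + Pi.single 2 a₂ := by
  nontriviality R
  have hdeg : (X ^ 3 + C c₂ * X ^ 2 + C c₁ * X + C c₀).natDegree = 3 := by compute_degree!
  have hpow (i : ℕ) (hi : i < 3) (a : R) :
      h.coeff (algebraMap R S a * h.root ^ i) = Pi.single i a := by
    rw [← Algebra.smul_def, map_smul, h.coeff_root_pow (hi.trans_eq hdeg.symm), ← Pi.single_smul,
      smul_eq_mul, mul_one]
  rw [← hpow 0 (by simp), ← hpow 1 (by simp), ← hpow 2 (by simp), ← map_add, ← map_add, pow_zero,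
    pow_one, mul_one, quadraticAt]

variable {a₀ a₁ a₂ : R}

theorem quadraticAt_dvd_algebraMap_iff
    (h : IsAdjoinRootMonic S (X ^ 3 + C c₂ * X ^ 2 + C c₁ * X + C c₀))
    (hcop : IsCoprime (Mmat c₀ c₁ c₂ a₀ a₁ a₂).det (cof (Mmat c₀ c₁ c₂ a₀ a₁ a₂) 0 2)) {m : R} :
    quadraticAt h.root a₀ a₁ a₂ ∣ algebraMap R S m ↔ (Mmat c₀ c₁ c₂ a₀ a₁ a₂).det ∣ m := by
  set M := Mmat c₀ c₁ c₂ a₀ a₁ a₂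
  have hnorm := quadraticAt_mul_quadraticAt_cof h.aeval_root_self a₀ a₁ a₂
  refine ⟨fun ⟨δ, hδ⟩ ↦ ?_, fun hm ↦ (Dvd.intro _ hnorm).trans (map_dvd _ hm)⟩
  have hmul : m • quadraticAt h.root (cof M 0 0) (cof M 0 1) (cof M 0 2) = M.det • δ := by
    rw [Algebra.smul_def, Algebra.smul_def, hδ, ← hnorm]
    ring
  have hcoeff : m * cof M 0 2 = M.det * h.coeff δ 2 := by
    simpa [coeff_quadraticAt] using congrFun (congrArg h.coeff hmul) 2
  exact hcop.dvd_of_dvd_mul_right (Dvd.intro _ hcoeff.symm)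

theorem quadraticAt_dvd_algebraMap_sub_root_iff
    (h : IsAdjoinRootMonic S (X ^ 3 + C c₂ * X ^ 2 + C c₁ * X + C c₀))
    (hcop : IsCoprime (Mmat c₀ c₁ c₂ a₀ a₁ a₂).det (cof (Mmat c₀ c₁ c₂ a₀ a₁ a₂) 0 2)) {n : R} :
    quadraticAt h.root a₀ a₁ a₂ ∣ algebraMap R S n - h.root ↔
      (Mmat c₀ c₁ c₂ a₀ a₁ a₂).det ∣
        cof (Mmat c₀ c₁ c₂ a₀ a₁ a₂) 0 2 * n - cof (Mmat c₀ c₁ c₂ a₀ a₁ a₂) 1 2 := by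
  set M := Mmat c₀ c₁ c₂ a₀ a₁ a₂
  set ι := algebraMap R S
  have hunit : IsCoprime (quadraticAt h.root a₀ a₁ a₂) (ι (cof M 0 2)) :=
    (hcop.map ι).of_isCoprime_of_dvd_left
      (Dvd.intro _ (quadraticAt_mul_quadraticAt_cof h.aeval_root_self a₀ a₁ a₂))
  have hsplit : ι (cof M 0 2) * (ι n - h.root) =
      ι (cof M 0 2 * n - cof M 1 2) + (ι (cof M 1 2) - ι (cof M 0 2) * h.root) := by
    rw [map_sub, map_mul]
    ring
  calc quadraticAt h.root a₀ a₁ a₂ ∣ ι n - h.root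
    _ ↔ quadraticAt h.root a₀ a₁ a₂ ∣ ι (cof M 0 2) * (ι n - h.root) :=
      ⟨fun hn ↦ hn.mul_left _, hunit.dvd_of_dvd_mul_left⟩
    _ ↔ quadraticAt h.root a₀ a₁ a₂ ∣ ι (cof M 0 2 * n - cof M 1 2) := by
      rw [hsplit, dvd_add_left (quadraticAt_dvd_cof_sub_cof_mul h.aeval_root_self a₀ a₁ a₂)]
    _ ↔ M.det ∣ cof M 0 2 * n - cof M 1 2 := quadraticAt_dvd_algebraMap_iff h hcop

theorem det_Mmat_ne_zero_of_isCoprime_cof [IsDomain S]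
    (h : IsAdjoinRootMonic S (X ^ 3 + C c₂ * X ^ 2 + C c₁ * X + C c₀))
    (hcop : IsCoprime (Mmat c₀ c₁ c₂ a₀ a₁ a₂).det (cof (Mmat c₀ c₁ c₂ a₀ a₁ a₂) 0 2)) :
    (Mmat c₀ c₁ c₂ a₀ a₁ a₂).det ≠ 0 := by
  intro hdet
  have : Nontrivial R := (algebraMap R S).domain_nontrivial
  set M := Mmat c₀ c₁ c₂ a₀ a₁ a₂
  have hcof : cof M 0 2 ≠ 0 := (isCoprime_zero_left.1 (hdet ▸ hcop)).ne_zero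
  have hprod := quadraticAt_mul_quadraticAt_cof h.aeval_root_self a₀ a₁ a₂
  rw [hdet, map_zero] at hprod
  rcases mul_eq_zero.1 hprod with hα | hβ
  · have hlin := quadraticAt_dvd_cof_sub_cof_mul h.aeval_root_self a₀ a₁ a₂
    rw [hα, zero_dvd_iff] at hlin
    have hquad : quadraticAt h.root (cof M 1 2) (-cof M 0 2) 0 = 0 := by
      rw [← hlin, quadraticAt, map_neg, map_zero]
      ring
    exact hcof (by simpa [coeff_quadraticAt] using congrFun (congrArg h.coeff hquad) 1)
  · exact hcof (by simpa [coeff_quadraticAt] using congrFun (congrArg h.coeff hβ) 2)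

end Cubic

section IntegrallyClosed

variable {R A : Type*} [CommRing R] [IsDomain R] [IsIntegrallyClosed R] [CommRing A] [IsDomain A]
  [Algebra R A] [Module.IsTorsionFree R A]

theorem minpoly_eq_of_irreducible_of_monic {f : R[X]} (hirr : Irreducible f) (hmonic : f.Monic)
    {x : A} (hx : aeval x f = 0) : minpoly R x = f := by
  have hint : IsIntegral R x := ⟨f, hmonic, hx⟩
  have hassoc : Associated f (minpoly R x) :=
    (hirr.dvd_iff.1 (minpoly.isIntegrallyClosed_dvd hint hx)).resolve_left (minpoly.not_isUnit R x)
  exact eq_of_monic_of_associated (minpoly.monic hint) hmonic hassoc.symm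

theorem exists_isAdjoinRootMonic_adjoin {f : R[X]} (hirr : Irreducible f) (hmonic : f.Monic)
    {x : A} (hx : aeval x f = 0) :
    ∃ h : IsAdjoinRootMonic (Algebra.adjoin R {x}) f,
      h.root = ⟨x, Algebra.self_mem_adjoin_singleton R x⟩ := by
  obtain rfl := minpoly_eq_of_irreducible_of_monic hirr hmonic hx
  have hint : IsIntegral R x := ⟨_, hmonic, hx⟩
  refine ⟨⟨(AdjoinRoot.isAdjoinRoot _).ofAlgEquiv (minpoly.equivAdjoin hint), hmonic⟩, ?_⟩
  simp [AdjoinRoot.Minpoly.toAdjoin]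

end IntegrallyClosed

theorem exists_forall_mul_modEq_iff {m s : ℤ} (hm : 0 < m) (hcop : IsCoprime m s) (t : ℤ) :
    ∃ k, 0 ≤ k ∧ k < m ∧ ∀ n, s * n ≡ t [ZMOD m] ↔ n ≡ k [ZMOD m] := by
  obtain ⟨v, u, huv⟩ := hcop
  have hinv : u * s ≡ 1 [ZMOD m] := Int.modEq_iff_dvd.2 ⟨v, by linear_combination -huv⟩
  obtain ⟨k, hk0, hkm, hk⟩ := Int.existsUnique_equiv (u * t) hm
  refine ⟨k, hk0, hkm, fun n ↦ ⟨fun hn ↦ ?_, fun hn ↦ ?_⟩⟩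
  · calc n = 1 * n := (one_mul n).symm
      _ ≡ u * s * n [ZMOD m] := (hinv.mul_right n).symm
      _ = u * (s * n) := mul_assoc u s n
      _ ≡ u * t [ZMOD m] := hn.mul_left u
      _ ≡ k [ZMOD m] := hk.symm
  · calc s * n ≡ s * (u * t) [ZMOD m] := (hn.trans hk).mul_left s
      _ = u * s * t := by ring
      _ ≡ 1 * t [ZMOD m] := hinv.mul_right t
      _ = t := one_mul t

theorem stmt_9_general (c₀ c₁ c₂ : ℤ)
    (hf : Irreducible (X ^ 3 + C c₂ * X ^ 2 + C c₁ * X + C c₀ : ℤ[X]))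
    (K : Type*) [Field K] [CharZero K] (r : K)
    (hr : aeval r (X ^ 3 + C c₂ * X ^ 2 + C c₁ * X + C c₀ : ℤ[X]) = 0)
    (a₀ a₁ a₂ : ℤ)
    (hcop : IsCoprime (Mmat c₀ c₁ c₂ a₀ a₁ a₂).det (cof (Mmat c₀ c₁ c₂ a₀ a₁ a₂) 0 2)) :
    ∃ k : ℤ, 0 ≤ k ∧ k < ((Mmat c₀ c₁ c₂ a₀ a₁ a₂).det.natAbs : ℤ) ∧
      (∀ n : ℤ,
        ((a₀ : Zr r) + (a₁ : Zr r) * rZ r + (a₂ : Zr r) * rZ r ^ 2 ∣ (n : Zr r) - rZ r) ↔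
          n ≡ k [ZMOD ((Mmat c₀ c₁ c₂ a₀ a₁ a₂).det.natAbs : ℤ)]) ∧
      cof (Mmat c₀ c₁ c₂ a₀ a₁ a₂) 0 2 * k ≡ cof (Mmat c₀ c₁ c₂ a₀ a₁ a₂) 1 2
        [ZMOD ((Mmat c₀ c₁ c₂ a₀ a₁ a₂).det.natAbs : ℤ)] := by
  set M := Mmat c₀ c₁ c₂ a₀ a₁ a₂
  obtain ⟨h, hroot : h.root = rZ r⟩ := exists_isAdjoinRootMonic_adjoin hf (by monicity!) hr
  have hpos : 0 < (M.det.natAbs : ℤ) := by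
    exact_mod_cast Int.natAbs_pos.2 (det_Mmat_ne_zero_of_isCoprime_cof h hcop)
  have hcopN : IsCoprime (M.det.natAbs : ℤ) (cof M 0 2) := by
    rwa [Int.natCast_natAbs, IsCoprime.abs_left_iff]
  obtain ⟨k, hk0, hkN, hk⟩ := exists_forall_mul_modEq_iff hpos hcopN (cof M 1 2)
  refine ⟨k, hk0, hkN, fun n ↦ ?_, (hk k).2 rfl⟩
  have hdvd := quadraticAt_dvd_algebraMap_sub_root_iff h hcop (n := n)
  simp only [hroot, quadraticAt, eq_intCast] at hdvd
  rw [← hk, Int.modEq_comm, Int.modEq_iff_dvd, Int.natAbs_dvd]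
  exact hdvd

/-- Let `α = a₀ + a₁r + a₂r² ∈ ℤ[r]` with
`gcd(N(α), B₁₃·Disc(f)) = 1`, where `N(α) = |det M|`. Then there is an integer `k` with
`0 ≤ k < N(α)` such that for every integer `n`, `α ∣ n − r` in `ℤ[r]` iff
`n ≡ k (mod N(α))`; moreover `B₁₃·k ≡ B₂₃ (mod N(α))`. -/
theorem stmt_9 (c₀ c₁ c₂ : ℤ)
    (hf : Irreducible (X ^ 3 + C c₂ * X ^ 2 + C c₁ * X + C c₀ : ℤ[X]))
    (K : Type*) [Field K] [NumberField K] (r : K)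
    (hr : aeval r (X ^ 3 + C c₂ * X ^ 2 + C c₁ * X + C c₀ : ℤ[X]) = 0)
    (hgen : Algebra.adjoin ℚ {r} = ⊤)
    (a₀ a₁ a₂ : ℤ)
    (hgcd : Int.gcd (Mmat c₀ c₁ c₂ a₀ a₁ a₂).det
      (cof (Mmat c₀ c₁ c₂ a₀ a₁ a₂) 0 2 * discF c₀ c₁ c₂) = 1) :
    ∃ k : ℤ, 0 ≤ k ∧ k < ((Mmat c₀ c₁ c₂ a₀ a₁ a₂).det.natAbs : ℤ) ∧
      (∀ n : ℤ,
        ((a₀ : Zr r) + (a₁ : Zr r) * rZ r + (a₂ : Zr r) * rZ r ^ 2 ∣ (n : Zr r) - rZ r) ↔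
          n ≡ k [ZMOD ((Mmat c₀ c₁ c₂ a₀ a₁ a₂).det.natAbs : ℤ)]) ∧
      cof (Mmat c₀ c₁ c₂ a₀ a₁ a₂) 0 2 * k ≡ cof (Mmat c₀ c₁ c₂ a₀ a₁ a₂) 1 2
        [ZMOD ((Mmat c₀ c₁ c₂ a₀ a₁ a₂).det.natAbs : ℤ)] :=
  stmt_9_general c₀ c₁ c₂ hf K r hr a₀ a₁ a₂
    (Int.isCoprime_iff_gcd_eq_one.2 hgcd).of_mul_right_left
end

section
/- For all integers c₀, c₁, c₂, a₁, a₂, let R = Res_T(B₁₃(T), N(T)) and R₀ = Res_T(B₁₃(T), B₂₂(T)) be the resultants with respect to T = a₀ of the polynomials B₁₃ (of nominal degree 1 in a₀), det M (of nominal degree 3 in a₀) and B₂₂ (of nominal degree 2 in a₀). Then, with q₀ = a₂c₂ − a₁, the identity −q₀²·R = R₀² holds. -/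
/-!
Write `q₀ = a₂c₂ - a₁`. Multiplying by `q₀ + a₂r` kills the `r²`-coordinate of `α`:
`α (q₀ + a₂r) = w - B₁₃ r` with `w = q₀a₀ - c₀a₂²`. By Cramer's rule `q₀ N ≡ w B₁₁` modulo `B₁₃`.
The adjugate of `M` is again a multiplication matrix, namely that of `N / α`, whence `B₁₁ ≡ B₂₂`
modulo `B₁₃`. Let `e` be the norm of `q₀ + a₂r`. Since `Res(B₁₃, w) = -e`, we get `q₀ R = -e R₀`,
while a direct computation gives `R₀ = q₀ e`; eliminating `e` yields `R₀² = -q₀² R`.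
-/

open Polynomial Matrix

section Resultant

variable {S : Type*} [CommRing S]

theorem resultant_mul_right_of_natDegree_le {f g h : S[X]} {m k n : ℕ} (hf : f.natDegree ≤ m)
    (hg : g.natDegree ≤ k) (hh : h.natDegree ≤ n) :
    f.resultant (g * h) m (k + n) = f.resultant g m k * f.resultant h m n := by
  obtain ⟨i, rfl⟩ := Nat.exists_eq_add_of_le hg
  obtain ⟨j, rfl⟩ := Nat.exists_eq_add_of_le hh
  rw [add_add_add_comm, resultant_add_right_deg _ _ _ _ _ natDegree_mul_le,
    resultant_mul_right _ _ _ _ hf, resultant_add_right_deg _ _ _ _ _ le_rfl,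
    resultant_add_right_deg _ _ _ _ _ le_rfl]
  ring

variable (f g h : S[X])

theorem sylvester_one_left_eq_updateCol (n : ℕ) :
    f.sylvester g 1 n =
      (f.sylvester 0 1 n).updateCol (Fin.castAdd n 0) fun i ↦ g.coeff i := by
  ext i j
  induction j using Fin.addCases with
  | left j =>
    have hi : (i : ℕ) ≤ n := by omega
    simp [sylvester, Subsingleton.elim j 0, hi]
  | right j => simp [sylvester, Fin.ext_iff]

theorem resultant_one_left_deg_add (n : ℕ) :
    f.resultant (g + h) 1 n = f.resultant g 1 n + f.resultant h 1 n := by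
  simp only [resultant, sylvester_one_left_eq_updateCol f g, sylvester_one_left_eq_updateCol f h,
    sylvester_one_left_eq_updateCol f (g + h), coeff_add]
  exact det_updateCol_add _ _ _ _

theorem resultant_one_one :
    f.resultant g 1 1 = f.coeff 1 * g.coeff 0 - f.coeff 0 * g.coeff 1 := by
  have hsylv : f.sylvester g 1 1 = !![g.coeff 0, f.coeff 0; g.coeff 1, f.coeff 1] := by
    ext i j
    fin_cases i <;> fin_cases j <;> simp [sylvester, Fin.addCases]
  rw [resultant, hsylv, det_fin_two_of]
  ring

theorem det_eq_resultant_one_two :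
    det !![f.coeff 1, f.coeff 0, 0;
           0, f.coeff 1, f.coeff 0;
           g.coeff 2, g.coeff 1, g.coeff 0] = f.resultant g 1 2 := by
  rw [resultant, ← det_transpose, ← det_submatrix_equiv_self Fin.revPerm]
  congr 1
  ext i j
  fin_cases i <;> fin_cases j <;> simp [sylvester, Fin.addCases, Fin.rev]

theorem det_eq_resultant_one_three :
    det !![f.coeff 1, f.coeff 0, 0, 0;
           0, f.coeff 1, f.coeff 0, 0;
           0, 0, f.coeff 1, f.coeff 0;
           g.coeff 3, g.coeff 2, g.coeff 1, g.coeff 0] = f.resultant g 1 3 := by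
  rw [resultant, ← det_transpose, ← det_submatrix_equiv_self Fin.revPerm]
  congr 1
  ext i j
  fin_cases i <;> fin_cases j <;> simp [sylvester, Fin.addCases, Fin.rev]

end Resultant

theorem adjugate_apply_eq_cof {S : Type*} [CommRing S] (M : Matrix (Fin 3) (Fin 3) S)
    (i j : Fin 3) : M.adjugate i j = cof M j i :=
  adjugate_fin_succ_eq_det_submatrix M i j

namespace Mmat

section Cofactors

variable {S : Type*} [CommRing S] (c₀ c₁ c₂ a₀ a₁ a₂ : S)

theorem cof_zero_two :
    cof (Mmat c₀ c₁ c₂ a₀ a₁ a₂) 0 2 = c₁ * a₂ ^ 2 - a₁ * (a₂ * c₂ - a₁) - a₂ * a₀ := by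
  simp only [← adjugate_apply_eq_cof, Mmat, adjugate_fin_three_of, of_apply, cons_val]
  ring

theorem cof_one_one :
    cof (Mmat c₀ c₁ c₂ a₀ a₁ a₂) 1 1 =
      a₀ * (a₀ + (c₂ * (a₂ * c₂ - a₁) - c₁ * a₂)) - c₀ * a₂ * (a₂ * c₂ - a₁) := by
  simp only [← adjugate_apply_eq_cof, Mmat, adjugate_fin_three_of, of_apply, cons_val]
  ring

theorem adjugate_eq :
    letI M := Mmat c₀ c₁ c₂ a₀ a₁ a₂
    M.adjugate = Mmat c₀ c₁ c₂ (cof M 0 0) (cof M 0 1) (cof M 0 2) := by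
  simp only [← adjugate_apply_eq_cof]
  simp only [Mmat, adjugate_fin_three_of, of_apply, cons_val]
  ext i j
  fin_cases i <;> fin_cases j <;> simp <;> ring

theorem cof_zero_zero :
    letI M := Mmat c₀ c₁ c₂ a₀ a₁ a₂
    cof M 0 0 = cof M 1 1 + c₁ * cof M 0 2 := by
  rw [← adjugate_apply_eq_cof _ 1 1, adjugate_eq]
  simp [Mmat]

theorem mulVec_linear (x y : S) :
    Mmat c₀ c₁ c₂ a₀ a₁ a₂ *ᵥ ![x, y, 0] =
      ![a₀ * x - c₀ * a₂ * y, a₁ * x + (a₀ - c₁ * a₂) * y, a₂ * x + (a₁ - c₂ * a₂) * y] := by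
  ext i
  fin_cases i <;> simp [Mmat, mulVec, dotProduct, Fin.sum_univ_three, sub_eq_add_neg]

theorem mulVec_linear_eq_cof_zero_two :
    letI M := Mmat c₀ c₁ c₂ a₀ a₁ a₂
    M *ᵥ ![a₂ * c₂ - a₁, a₂, 0] =
      ![(a₂ * c₂ - a₁) * a₀ - c₀ * a₂ ^ 2, -cof M 0 2, 0] := by
  rw [mulVec_linear, cof_zero_two]
  congrm ![?_, ?_, ?_] <;> ring

theorem mul_det_eq :
    letI M := Mmat c₀ c₁ c₂ a₀ a₁ a₂
    letI w := (a₂ * c₂ - a₁) * a₀ - c₀ * a₂ ^ 2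
    (a₂ * c₂ - a₁) * M.det = w * cof M 1 1 + cof M 0 2 * (c₁ * w + c₀ * cof M 0 2) := by
  set M := Mmat c₀ c₁ c₂ a₀ a₁ a₂
  set w := (a₂ * c₂ - a₁) * a₀ - c₀ * a₂ ^ 2
  have cramer : M.adjugate *ᵥ (M *ᵥ ![a₂ * c₂ - a₁, a₂, 0]) =
      M.det • ![a₂ * c₂ - a₁, a₂, 0] := by
    rw [mulVec_mulVec, adjugate_mul, smul_mulVec, one_mulVec]
  have cramer_zero : cof M 0 0 * w - c₀ * cof M 0 2 * -cof M 0 2 =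
      M.det * (a₂ * c₂ - a₁) := by
    rw [mulVec_linear_eq_cof_zero_two, adjugate_eq, mulVec_linear] at cramer
    exact congrFun cramer 0
  rw [cof_zero_zero] at cramer_zero
  linear_combination -cramer_zero

theorem det_linear (x y : S) :
    (Mmat c₀ c₁ c₂ x y 0).det = x ^ 3 - c₂ * x ^ 2 * y + c₁ * x * y ^ 2 - c₀ * y ^ 3 := by
  simp only [Mmat, det_fin_three, of_apply, cons_val]
  ring

end Cofactors

section Resultants

variable {S : Type*} [CommRing S] (c₀ c₁ c₂ a₁ a₂ : S)

/-- The matrix `M` with the indeterminate `T = X` in place of `a₀`. -/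
noncomputable abbrev generic : Matrix (Fin 3) (Fin 3) S[X] :=
  Mmat (C c₀) (C c₁) (C c₂) X (C a₁) (C a₂)

theorem cof_generic_zero_two :
    cof (generic c₀ c₁ c₂ a₁ a₂) 0 2 =
      C (-a₂) * X + C (c₁ * a₂ ^ 2 - a₁ * (a₂ * c₂ - a₁)) := by
  rw [cof_zero_two]
  simp only [map_sub, map_mul, map_pow, map_neg]
  ring

theorem coeff_zero_cof_generic_zero_two :
    (cof (generic c₀ c₁ c₂ a₁ a₂) 0 2).coeff 0 = c₁ * a₂ ^ 2 - a₁ * (a₂ * c₂ - a₁) := by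
  rw [cof_generic_zero_two, coeff_add, coeff_C_zero, mul_coeff_zero, coeff_X_zero, mul_zero,
    zero_add]

theorem coeff_one_cof_generic_zero_two :
    (cof (generic c₀ c₁ c₂ a₁ a₂) 0 2).coeff 1 = -a₂ := by
  rw [cof_generic_zero_two, coeff_add, coeff_C_succ, coeff_C_mul, coeff_X_one, mul_one, add_zero]

theorem natDegree_cof_generic_zero_two_le :
    (cof (generic c₀ c₁ c₂ a₁ a₂) 0 2).natDegree ≤ 1 := by
  rw [cof_generic_zero_two]
  exact natDegree_linear_le

theorem resultant_cof_generic_zero_two_linear (x y : S) :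
    (cof (generic c₀ c₁ c₂ a₁ a₂) 0 2).resultant (C x * X + C y) 1 1 =
      -a₂ * y - (c₁ * a₂ ^ 2 - a₁ * (a₂ * c₂ - a₁)) * x := by
  rw [resultant_one_one, coeff_zero_cof_generic_zero_two, coeff_one_cof_generic_zero_two]
  simp

theorem resultant_cof_generic_zero_two_cof_one_one :
    letI M := generic c₀ c₁ c₂ a₁ a₂
    (cof M 0 2).resultant (cof M 1 1) 1 2 =
      (a₂ * c₂ - a₁) * (Mmat c₀ c₁ c₂ (a₂ * c₂ - a₁) a₂ 0).det := by
  have cof_eq : cof (generic c₀ c₁ c₂ a₁ a₂) 1 1 =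
      (C 1 * X + C 0) * (C 1 * X + C (c₂ * (a₂ * c₂ - a₁) - c₁ * a₂)) +
        C (-(c₀ * a₂ * (a₂ * c₂ - a₁))) := by
    rw [cof_one_one]
    simp [sub_eq_add_neg]
  rw [cof_eq, resultant_one_left_deg_add, resultant_C_right, coeff_one_cof_generic_zero_two,
    resultant_mul_right_of_natDegree_le (k := 1) (n := 1)
      (natDegree_cof_generic_zero_two_le ..) natDegree_linear_le natDegree_linear_le,
    resultant_cof_generic_zero_two_linear, resultant_cof_generic_zero_two_linear, det_linear]
  ring

theorem mul_resultant_cof_generic_zero_two_det :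
    letI M := generic c₀ c₁ c₂ a₁ a₂
    (a₂ * c₂ - a₁) * (cof M 0 2).resultant M.det 1 3 =
      -(Mmat c₀ c₁ c₂ (a₂ * c₂ - a₁) a₂ 0).det * (cof M 0 2).resultant (cof M 1 1) 1 2 := by
  set M := generic c₀ c₁ c₂ a₁ a₂
  set w : S[X] := C (a₂ * c₂ - a₁) * X + C (-(c₀ * a₂ ^ 2))
  have hf : (cof M 0 2).natDegree ≤ 1 := natDegree_cof_generic_zero_two_le ..
  have hw : w.natDegree ≤ 1 := natDegree_linear_le
  have hquot : (C c₁ * w + C c₀ * cof M 0 2).natDegree ≤ 1 :=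
    natDegree_add_le_of_degree_le ((natDegree_C_mul_le _ _).trans hw)
      ((natDegree_C_mul_le _ _).trans hf)
  have hcof : (cof M 1 1).natDegree ≤ 2 := by
    rw [cof_one_one]
    compute_degree
  have hres : (cof M 0 2).resultant w 1 1 = -(Mmat c₀ c₁ c₂ (a₂ * c₂ - a₁) a₂ 0).det := by
    rw [resultant_cof_generic_zero_two_linear, det_linear]
    ring
  have hdet : C (a₂ * c₂ - a₁) * M.det =
      w * cof M 1 1 + cof M 0 2 * (C c₁ * w + C c₀ * cof M 0 2) := by
    simpa [w, sub_eq_add_neg] using mul_det_eq (C c₀) (C c₁) (C c₂) X (C a₁) (C a₂)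
  calc (a₂ * c₂ - a₁) * (cof M 0 2).resultant M.det 1 3
      = (cof M 0 2).resultant (C (a₂ * c₂ - a₁) * M.det) 1 3 := by
        rw [resultant_C_mul_right, pow_one]
    _ = (cof M 0 2).resultant (w * cof M 1 1) 1 (1 + 2) := by
        rw [hdet, resultant_add_mul_right _ _ _ _ _ (by omega) hf]
    _ = -(Mmat c₀ c₁ c₂ (a₂ * c₂ - a₁) a₂ 0).det * (cof M 0 2).resultant (cof M 1 1) 1 2 := by
        rw [resultant_mul_right_of_natDegree_le hf hw hcof, hres]

end Resultants

end Mmat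

theorem stmt_13_general {S : Type*} [CommRing S] (c₀ c₁ c₂ a₁ a₂ : S) :
    letI B13 : S[X] := cof (Mmat (C c₀) (C c₁) (C c₂) X (C a₁) (C a₂)) 0 2
    letI B22 : S[X] := cof (Mmat (C c₀) (C c₁) (C c₂) X (C a₁) (C a₂)) 1 1
    letI NT : S[X] := (Mmat (C c₀) (C c₁) (C c₂) X (C a₁) (C a₂)).det
    letI R : S := Matrix.det
      !![B13.coeff 1, B13.coeff 0, 0, 0;
         0, B13.coeff 1, B13.coeff 0, 0;
         0, 0, B13.coeff 1, B13.coeff 0;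
         NT.coeff 3, NT.coeff 2, NT.coeff 1, NT.coeff 0]
    letI R0 : S := Matrix.det
      !![B13.coeff 1, B13.coeff 0, 0;
         0, B13.coeff 1, B13.coeff 0;
         B22.coeff 2, B22.coeff 1, B22.coeff 0]
    R0 ^ 2 = -(a₂ * c₂ - a₁) ^ 2 * R := by
  rw [det_eq_resultant_one_two, det_eq_resultant_one_three]
  have hR₀ := Mmat.resultant_cof_generic_zero_two_cof_one_one c₀ c₁ c₂ a₁ a₂
  have hR := Mmat.mul_resultant_cof_generic_zero_two_det c₀ c₁ c₂ a₁ a₂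
  set M := Mmat.generic c₀ c₁ c₂ a₁ a₂
  set e := (Mmat c₀ c₁ c₂ (a₂ * c₂ - a₁) a₂ 0).det
  calc (cof M 0 2).resultant (cof M 1 1) 1 2 ^ 2
      = (a₂ * c₂ - a₁) * e * (cof M 0 2).resultant (cof M 1 1) 1 2 := by rw [sq, ← hR₀]
    _ = -(a₂ * c₂ - a₁) * (-e * (cof M 0 2).resultant (cof M 1 1) 1 2) := by ring
    _ = -(a₂ * c₂ - a₁) ^ 2 * (cof M 0 2).resultant M.det 1 3 := by rw [← hR]; ring

open Polynomial in
/-- For all integers `c₀, c₁, c₂, a₁, a₂`, let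
`R = Res_T(B₁₃(T), N(T))` and `R₀ = Res_T(B₁₃(T), B₂₂(T))` be the resultants with respect to
`T = a₀` (given by the determinants of the Sylvester matrices for the nominal degrees
`1, 3` and `1, 2` respectively) of `B₁₃` (nominal degree 1 in `a₀`), `N = det M` (nominal
degree 3) and `B₂₂` (nominal degree 2). Then, with `q₀ = a₂c₂ − a₁`, one has `−q₀²·R = R₀²`. -/
theorem stmt_13 (c₀ c₁ c₂ a₁ a₂ : ℤ) :
    letI B13 : ℤ[X] := cof (Mmat (C c₀) (C c₁) (C c₂) X (C a₁) (C a₂)) 0 2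
    letI B22 : ℤ[X] := cof (Mmat (C c₀) (C c₁) (C c₂) X (C a₁) (C a₂)) 1 1
    letI NT : ℤ[X] := (Mmat (C c₀) (C c₁) (C c₂) X (C a₁) (C a₂)).det
    letI R : ℤ := Matrix.det
      !![B13.coeff 1, B13.coeff 0, 0, 0;
         0, B13.coeff 1, B13.coeff 0, 0;
         0, 0, B13.coeff 1, B13.coeff 0;
         NT.coeff 3, NT.coeff 2, NT.coeff 1, NT.coeff 0]
    letI R0 : ℤ := Matrix.det
      !![B13.coeff 1, B13.coeff 0, 0;
         0, B13.coeff 1, B13.coeff 0;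
         B22.coeff 2, B22.coeff 1, B22.coeff 0]
    R0 ^ 2 = -(a₂ * c₂ - a₁) ^ 2 * R :=
  stmt_13_general c₀ c₁ c₂ a₁ a₂
end

section
/- For every ε > 0 there is a constant C (depending only on f and ε) such that the following holds for all reals A, B, all M ≥ 1 and all X ≥ 2. For a nonzero ideal R of ℤ[r], let S(R) = #{(a, b) ∈ ℤ² : A ≤ a ≤ A + M, B ≤ b ≤ B + M, a − b·r ∈ R}. Then ∑_{R : N(R) ≤ X, ρ(R) = 1} |S(R) − M²/N(R)| ≤ C·(M + X)·X^ε, where the sum is over nonzero ideals R of ℤ[r] with N(R) ≤ X and ρ(R) = 1. -/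
open Polynomial

/-- The norm `N(I)` of an ideal `I` of `ℤ[r]`, i.e. the cardinality of `ℤ[r]/I`. -/
noncomputable def Nrm {K : Type*} [Field K] (r : K) (I : Ideal (Zr r)) : ℕ :=
  Nat.card ((Zr r) ⧸ I)

/-- `ρ(I) = #{n mod N(I) : I ∣ n − r}`. -/
noncomputable def rho {K : Type*} [Field K] (r : K) (I : Ideal (Zr r)) : ℕ :=
  Nat.card {k : ZMod (Nrm r I) // ∃ n : ℤ, (n : ZMod (Nrm r I)) = k ∧ (n : Zr r) - rZ r ∈ I}

/-!
An ideal `R` of `ℤ[r]` with `ρ(R) = 1` is determined by its norm `N` and the residue `k` with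
`r ≡ k (mod R)`; here `k` is a root of `f` modulo `N`, and `a - b r ∈ R` means `a ≡ b k (mod N)`.
Expanding this congruence in additive characters modulo `N`, the trivial frequency contributes
`M² / N + O(M / N)`, and a frequency `h ≠ 0` contributes `O(min(M, N / |l|) / |h|)`, where
`l ≡ -h k (mod N)` and `|h|, |l| ≤ N / 2`.

Sum over all `(N, k)` and exchange the order of summation: for fixed `(h, l)` the modulus `N`
divides the value of the homogenisation of `f` at `(l, -h)`, which is nonzero because `f` has no
rational root, so the divisor bound leaves only `O(X^ε)` choices of `N`. Each `N` carries `O(N^ε)`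
roots `k`: there are at most `deg f` modulo every prime, hence `O(N^ε)` modulo the radical of `N`,
and since the resultant of `f` and `f'` is nonzero, each of them lifts to boundedly many roots
modulo `N`. The harmonic sums over `h` and `l` then give `(M + X) X^ε`.
-/

/-! ### The divisor bound -/

theorem add_one_le_div_sub_one_mul_pow {x : ℝ} (hx : 1 < x) (a : ℕ) :
    (a + 1 : ℝ) ≤ x / (x - 1) * x ^ a := by
  have bernoulli : 1 + ((a + 1 : ℕ) : ℝ) * (x - 1) ≤ x ^ (a + 1) := by
    simpa using one_add_mul_le_pow (a := x - 1) (by linarith) (a + 1)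
  rw [div_mul_eq_mul_div, le_div_iff₀ (sub_pos.2 hx), ← pow_succ']
  push_cast at bernoulli
  linarith

theorem add_one_le_pow_of_two_le {x : ℝ} (hx : 2 ≤ x) (a : ℕ) : (a + 1 : ℝ) ≤ x ^ a :=
  calc (a + 1 : ℝ) ≤ 2 ^ a := by exact_mod_cast Nat.lt_two_pow_self
    _ ≤ x ^ a := by gcongr

theorem exists_card_divisors_le_mul_rpow {ε : ℝ} (hε : 0 < ε) :
    ∃ c ≥ 0, ∀ n : ℕ, n ≠ 0 → (n.divisors.card : ℝ) ≤ c * (n : ℝ) ^ ε := by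
  obtain ⟨P, hP⟩ := exists_nat_ge ((2 : ℝ) ^ ε⁻¹)
  have one_lt : 1 < (2 : ℝ) ^ ε := Real.one_lt_rpow one_lt_two hε
  set B : ℝ := 2 ^ ε / (2 ^ ε - 1)
  have one_le_B : 1 ≤ B := (one_le_div (sub_pos.2 one_lt)).2 (by linarith)
  have factor_le {p : ℕ} (hp : p.Prime) (a : ℕ) :
      (a + 1 : ℝ) ≤ (if p < P then B else 1) * ((p : ℝ) ^ a) ^ ε := by
    rw [← Real.rpow_natCast_mul p.cast_nonneg, mul_comm (a : ℝ),
      Real.rpow_mul_natCast p.cast_nonneg]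
    split_ifs with hpP
    · have two_le_p : (2 : ℝ) ≤ p := by exact_mod_cast hp.two_le
      exact (add_one_le_div_sub_one_mul_pow one_lt a).trans (by gcongr)
    · have two_le : (2 : ℝ) ≤ (p : ℝ) ^ ε :=
        (Real.rpow_inv_le_iff_of_pos zero_le_two p.cast_nonneg hε).1
          (hP.trans (by exact_mod_cast not_lt.1 hpP))
      simpa using add_one_le_pow_of_two_le two_le a
  refine ⟨B ^ P, by positivity, fun n hn => ?_⟩
  calc (n.divisors.card : ℝ) = ∏ p ∈ n.primeFactors, (n.factorization p + 1 : ℝ) := by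
        rw [Nat.card_divisors hn]; push_cast; rfl
    _ ≤ ∏ p ∈ n.primeFactors, (if p < P then B else 1) * ((p : ℝ) ^ n.factorization p) ^ ε :=
        Finset.prod_le_prod (fun _ _ => by positivity)
          fun p hp => factor_le (Nat.prime_of_mem_primeFactors hp) _
    _ = B ^ (n.primeFactors.filter (· < P)).card * (n : ℝ) ^ ε := by
        rw [Finset.prod_mul_distrib, ← Finset.prod_filter, Finset.prod_const,
          Real.finsetProd_rpow _ _ fun _ _ => by positivity]
        congr 2
        exact_mod_cast Nat.prod_factorization_pow_eq_self hn
    _ ≤ B ^ P * (n : ℝ) ^ ε := by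
        gcongr
        calc (n.primeFactors.filter (· < P)).card ≤ (Finset.range P).card :=
              Finset.card_le_card fun p hp => by simpa using (Finset.mem_filter.1 hp).2
          _ = P := Finset.card_range P

theorem two_pow_card_primeFactors_le_card_divisors {n : ℕ} (hn : n ≠ 0) :
    2 ^ n.primeFactors.card ≤ n.divisors.card := by
  rw [Nat.card_divisors hn]
  refine Finset.pow_card_le_prod _ _ _ fun p hp => ?_
  have : 0 < n.factorization p := (Nat.prime_of_mem_primeFactors hp).factorization_pos_of_dvd hn
    (Nat.dvd_of_mem_primeFactors hp)
  lia

/-! ### Roots of a polynomial modulo `N` -/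

/-- The residues `k ∈ [0, N)` with `f(k) ≡ 0 (mod N)`; residues are represented by integers so that
different moduli share one ambient type. -/
noncomputable def rootsMod (f : ℤ[X]) (N : ℕ) : Finset ℤ :=
  {k ∈ Finset.Ico 0 (N : ℤ) | (N : ℤ) ∣ f.eval k}

theorem mem_rootsMod {f : ℤ[X]} {N : ℕ} {k : ℤ} :
    k ∈ rootsMod f N ↔ (0 ≤ k ∧ k < N) ∧ (N : ℤ) ∣ f.eval k := by
  simp [rootsMod]

theorem emod_mem_rootsMod {f : ℤ[X]} {N : ℕ} (hN : N ≠ 0) {k : ℤ} (hk : (N : ℤ) ∣ f.eval k) :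
    k % N ∈ rootsMod f N := by
  refine mem_rootsMod.2 ⟨⟨Int.emod_nonneg _ (by lia), Int.emod_lt_of_pos _ (by lia)⟩, ?_⟩
  have hdiff : (N : ℤ) ∣ f.eval k - f.eval (k % N) :=
    Int.dvd_self_sub_emod.trans (sub_dvd_eval_sub _ _ f)
  exact (dvd_sub_right hk).1 hdiff

theorem eq_of_dvd_sub_of_mem_Ico {N k k' : ℤ} (hk : 0 ≤ k ∧ k < N) (hk' : 0 ≤ k' ∧ k' < N)
    (h : N ∣ k - k') : k = k' := by
  have := Int.eq_zero_of_abs_lt_dvd h (abs_lt.2 ⟨by lia, by lia⟩)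
  lia

theorem card_rootsMod_prime_le {f : ℤ[X]} (hf : f.IsPrimitive) {p : ℕ} (hp : p.Prime) :
    (rootsMod f p).card ≤ f.natDegree := by
  have : Fact p.Prime := ⟨hp⟩
  set g := f.map (Int.castRingHom (ZMod p))
  have hg : g ≠ 0 := by
    intro h
    have hdvd : C (p : ℤ) ∣ f := (C_dvd_iff_dvd_coeff _ _).2 fun i => by
      simpa [g, ZMod.intCast_zmod_eq_zero_iff_dvd] using congr(coeff $h i)
    exact (Nat.prime_iff_prime_int.1 hp).not_isUnit (hf _ hdvd)
  calc (rootsMod f p).card ≤ g.roots.toFinset.card := by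
        refine Finset.card_le_card_of_injOn (fun k : ℤ => (k : ZMod p)) (fun k hk => ?_) ?_
        · simpa [g, hg, ZMod.intCast_zmod_eq_zero_iff_dvd] using (mem_rootsMod.1 hk).2
        · intro k hk k' hk' h
          exact eq_of_dvd_sub_of_mem_Ico (mem_rootsMod.1 hk).1 (mem_rootsMod.1 hk').1
            ((ZMod.intCast_eq_intCast_iff_dvd_sub _ _ _).1 (Eq.symm h))
    _ ≤ g.natDegree := (Multiset.toFinset_card_le _).trans (card_roots' g)
    _ ≤ f.natDegree := natDegree_map_le

open UniqueFactorizationMonoid in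
theorem card_rootsMod_radical_le {f : ℤ[X]} (hf : f.IsPrimitive) (N : ℕ) :
    (rootsMod f (radical N)).card ≤ f.natDegree ^ N.primeFactors.card := by
  have prime_dvd_radical {p : ℕ} (hp : p ∈ N.primeFactors) : (p : ℤ) ∣ (radical N : ℕ) := by
    rw [Nat.radical_eq_prod_primeFactors]
    exact_mod_cast Finset.dvd_prod_of_mem _ hp
  calc (rootsMod f (radical N)).card
      ≤ (N.primeFactors.pi fun p => rootsMod f p).card := by
        refine Finset.card_le_card_of_injOn (fun k p _ => k % p) (fun k hk => ?_) ?_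
        · refine Finset.mem_pi.2 fun p hp => ?_
          exact emod_mem_rootsMod (Nat.prime_of_mem_primeFactors hp).ne_zero
            ((prime_dvd_radical hp).trans (mem_rootsMod.1 hk).2)
        · intro k hk k' hk' h
          refine eq_of_dvd_sub_of_mem_Ico (mem_rootsMod.1 hk).1 (mem_rootsMod.1 hk').1 ?_
          rw [Nat.radical_eq_prod_primeFactors, Int.natCast_dvd]
          refine Finset.prod_primes_dvd _ (fun p hp => (Nat.prime_of_mem_primeFactors hp).prime)
            fun p hp => Int.natCast_dvd.1 ?_
          exact Int.ModEq.dvd (congr_fun₂ h p hp).symm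
    _ = ∏ p ∈ N.primeFactors, (rootsMod f p).card := Finset.card_pi _ _
    _ ≤ f.natDegree ^ N.primeFactors.card := Finset.prod_le_pow_card _ _ _
        fun p hp => card_rootsMod_prime_le hf (Nat.prime_of_mem_primeFactors hp)

/-- Write `t = k' - k = D ρ s`. Taylor expansion and the Bézout relation give
`N ∣ b(k) (f(k') - f(k)) ≡ t (D + b(k) t g) = t D (1 + ρ u)`, where `1 + ρ u` is prime to `N`. -/
theorem dvd_mul_sub_of_dvd_eval {R : Type*} [CommRing R] {f a b : R[X]} {D N ρ k k' : R} {m : ℕ}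
    (bezout : f * a + derivative f * b = C D) (hρ : N ∣ ρ ^ m)
    (hk : N ∣ f.eval k) (hk' : N ∣ f.eval k') (hkk' : D * ρ ∣ k' - k) : N ∣ D * (k' - k) := by
  obtain ⟨s, hs⟩ := hkk'
  obtain ⟨g, taylor⟩ := binomExpansion f k (k' - k)
  rw [add_sub_cancel] at taylor
  have bezout_k : f.eval k * a.eval k + (derivative f).eval k * b.eval k = D := by
    simpa using congr(eval k $bezout)
  have hdvd : N ∣ (1 + ρ * (b.eval k * g * s)) * (D * (k' - k)) := by
    have : (1 + ρ * (b.eval k * g * s)) * (D * (k' - k)) =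
        b.eval k * f.eval k' + f.eval k * (a.eval k * (k' - k) - b.eval k) := by
      linear_combination (k' - k) * (-bezout_k - g * b.eval k * hs) - b.eval k * taylor
    rw [this]
    exact dvd_add (hk'.mul_left _) (hk.mul_right _)
  have hcop : IsCoprime N (1 + ρ * (b.eval k * g * s)) :=
    .of_isCoprime_of_dvd_left (IsCoprime.pow_left ⟨-(b.eval k * g * s), 1, by ring⟩) hρ
  exact hcop.dvd_of_dvd_mul_left hdvd

open UniqueFactorizationMonoid in
theorem card_rootsMod_le_mul_card_rootsMod_radical {f a b : ℤ[X]} {D : ℤ} (hD : 0 < D)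
    (bezout : f * a + derivative f * b = C D) {N : ℕ} (hN : N ≠ 0) :
    (rootsMod f N).card ≤ (rootsMod f (radical N)).card * (D.toNat * D.toNat) := by
  set q : ℕ := radical N
  have hq : q ≠ 0 := radical_ne_zero
  have hqN : (q : ℤ) ∣ N := by exact_mod_cast radical_dvd_self
  suffices (rootsMod f N).card ≤
      (rootsMod f q ×ˢ (Finset.Ico 0 D ×ˢ Finset.Ico 0 D)).card by
    simpa only [Finset.card_product, Int.card_Ico, sub_zero] using this
  refine Finset.card_le_card_of_injOn (fun k => (k % q, k / q % D, D * k / N)) (fun k hk => ?_) ?_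
  · obtain ⟨⟨k_nonneg, k_lt⟩, hk⟩ := mem_rootsMod.1 hk
    simp only [Finset.coe_product, Set.mem_prod, Finset.mem_coe, Finset.mem_Ico]
    refine ⟨emod_mem_rootsMod hq (hqN.trans hk),
      ⟨Int.emod_nonneg _ hD.ne', Int.emod_lt_of_pos _ hD⟩, by positivity, ?_⟩
    exact Int.ediv_lt_of_lt_mul (by lia) (by gcongr)
  · intro k hk k' hk' h
    obtain ⟨h_mod, h_digit, h_quot⟩ : k % q = k' % q ∧ k / q % D = k' / q % D ∧
      D * k / N = D * k' / N := by simpa using h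
    have hDq : D * q ∣ k - k' := by
      obtain ⟨s, hs⟩ := Int.ModEq.dvd (h_digit.symm : k' / q ≡ k / q [ZMOD D])
      refine ⟨s, ?_⟩
      linear_combination q * hs - Int.mul_ediv_add_emod k q + Int.mul_ediv_add_emod k' q + h_mod
    have hdvd : (N : ℤ) ∣ D * (k - k') :=
      dvd_mul_sub_of_dvd_eval bezout (by exact_mod_cast Nat.dvd_radical_pow_self hN)
        (mem_rootsMod.1 hk').2 (mem_rootsMod.1 hk).2 hDq
    have h_rem : D * k % N = D * k' % N :=
      ((Int.modEq_iff_dvd.2 (by rwa [← mul_sub]) : D * k' ≡ D * k [ZMOD N])).symm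
    refine mul_left_cancel₀ hD.ne' ?_
    rw [← Int.mul_ediv_add_emod (D * k) N, h_quot, h_rem, Int.mul_ediv_add_emod]

theorem irreducible_map_rat {f : ℤ[X]} (hf : Irreducible f) (hdeg : f.natDegree ≠ 0) :
    Irreducible (f.map (Int.castRingHom ℚ)) :=
  (IsPrimitive.Int.irreducible_iff_irreducible_map_cast (hf.isPrimitive hdeg)).1 hf

theorem exists_bezout_derivative {f : ℤ[X]} (hf : Irreducible f) (hdeg : f.natDegree ≠ 0) :
    ∃ D > 0, ∃ a b : ℤ[X], f * a + derivative f * b = C D := by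
  obtain ⟨a, b, -, -, hab⟩ :=
    exists_mul_add_mul_eq_C_resultant f (derivative f) le_rfl le_rfl (Or.inl hdeg)
  set D := f.resultant (derivative f)
  have hD : D ≠ 0 := by
    have hcop : IsCoprime (f.map (Int.castRingHom ℚ)) ((derivative f).map (Int.castRingHom ℚ)) := by
      simpa only [Separable, derivative_map] using (irreducible_map_rat hf hdeg).separable
    have hres := resultant_ne_zero _ _ hcop
    rw [resultant_map_map, natDegree_map_eq_of_injective Int.cast_injective,
      natDegree_map_eq_of_injective Int.cast_injective] at hres
    exact ne_zero_of_map hres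
  exact ⟨D * D, mul_self_pos.2 hD, a * C D, b * C D, by rw [C_mul, ← hab]; ring⟩

theorem exists_card_rootsMod_le_mul_rpow {f : ℤ[X]} (hf : Irreducible f) (hdeg : f.natDegree ≠ 0)
    {ε : ℝ} (hε : 0 < ε) :
    ∃ c ≥ 0, ∀ N : ℕ, N ≠ 0 → ((rootsMod f N).card : ℝ) ≤ c * (N : ℝ) ^ ε := by
  obtain ⟨D, hD, a, b, bezout⟩ := exists_bezout_derivative hf hdeg
  set d := f.natDegree
  obtain ⟨c, hc, card_divisors_le⟩ := exists_card_divisors_le_mul_rpow (ε := ε / d) (by positivity)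
  refine ⟨c ^ d * (D.toNat * D.toNat), by positivity, fun N hN => ?_⟩
  have card_radical_le : (rootsMod f (UniqueFactorizationMonoid.radical N)).card ≤
      N.divisors.card ^ d :=
    calc _ ≤ d ^ N.primeFactors.card := card_rootsMod_radical_le (hf.isPrimitive hdeg) N
      _ ≤ (2 ^ d) ^ N.primeFactors.card := by gcongr; exact Nat.lt_two_pow_self.le
      _ = (2 ^ N.primeFactors.card) ^ d := pow_right_comm _ _ _
      _ ≤ N.divisors.card ^ d := by
        gcongr; exact two_pow_card_primeFactors_le_card_divisors hN
  calc ((rootsMod f N).card : ℝ) ≤ (N.divisors.card : ℝ) ^ d * (D.toNat * D.toNat) := by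
        exact_mod_cast (card_rootsMod_le_mul_card_rootsMod_radical hD bezout hN).trans (by gcongr)
    _ ≤ (c * (N : ℝ) ^ (ε / d)) ^ d * (D.toNat * D.toNat) := by
        gcongr; exact card_divisors_le N hN
    _ = c ^ d * (D.toNat * D.toNat) * (N : ℝ) ^ ε := by
        rw [mul_pow, ← Real.rpow_mul_natCast N.cast_nonneg, div_mul_cancel₀ _ (by positivity)]
        ring

/-! ### Values of the homogenised polynomial -/

theorem aeval_rat_ne_zero {f : ℤ[X]} (hf : Irreducible f) (hdeg : 2 ≤ f.natDegree) (q : ℚ) :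
    aeval q f ≠ 0 := by
  intro h
  have hroot : (f.map (Int.castRingHom ℚ)).IsRoot q := by
    rwa [IsRoot, eval_map, ← algebraMap_int_eq, ← aeval_def]
  have : (f.map (Int.castRingHom ℚ)).natDegree = 1 := natDegree_eq_of_degree_eq_some
    (degree_eq_one_of_irreducible_of_root (irreducible_map_rat hf (by lia)) hroot)
  rw [natDegree_map_eq_of_injective Int.cast_injective] at this
  lia

theorem eval_scaleRoots_ne_zero {f : ℤ[X]} (hf : Irreducible f) (hdeg : 2 ≤ f.natDegree) {h : ℤ}
    (hh : h ≠ 0) (l : ℤ) : (f.scaleRoots h).eval l ≠ 0 := by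
  have hhQ : (h : ℚ) ≠ 0 := by exact_mod_cast hh
  have hcast : (((f.scaleRoots h).eval l : ℤ) : ℚ) = h ^ f.natDegree * aeval (l / h : ℚ) f := by
    have := scaleRoots_eval₂_mul (p := f) (Int.castRingHom ℚ) (l / h : ℚ) h
    rw [eq_intCast, mul_div_cancel₀ _ hhQ] at this
    simpa [aeval_def, eval₂_at_intCast] using this
  have := mul_ne_zero (pow_ne_zero f.natDegree hhQ) (aeval_rat_ne_zero hf hdeg (l / h))
  rw [← hcast] at this
  exact_mod_cast this

theorem dvd_eval_scaleRoots {R : Type*} [CommRing R] {f : R[X]} {N k h l : R}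
    (hk : N ∣ f.eval k) (hl : N ∣ l - h * k) : N ∣ (f.scaleRoots h).eval l := by
  have hdiff := hl.trans (sub_dvd_eval_sub l (h * k) (f.scaleRoots h))
  rw [scaleRoots_eval_mul] at hdiff
  exact (dvd_iff_dvd_of_dvd_sub hdiff).2 (hk.mul_left _)

theorem abs_eval_scaleRoots_le {R : Type*} [CommRing R] [LinearOrder R] [IsStrictOrderedRing R]
    (f : R[X]) {h l Y : R} (hh : |h| ≤ Y) (hl : |l| ≤ Y) :
    |(f.scaleRoots h).eval l| ≤
      (∑ i ∈ Finset.range (f.natDegree + 1), |f.coeff i|) * Y ^ f.natDegree := by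
  rw [eval_eq_sum_range, natDegree_scaleRoots, Finset.sum_mul]
  refine (Finset.abs_sum_le_sum_abs _ _).trans (Finset.sum_le_sum fun i hi => ?_)
  have hi : i ≤ f.natDegree := Finset.mem_range_succ_iff.1 hi
  calc |(f.scaleRoots h).coeff i * l ^ i|
      = |f.coeff i| * (|h| ^ (f.natDegree - i) * |l| ^ i) := by
        rw [coeff_scaleRoots, abs_mul, abs_mul, abs_pow, abs_pow, mul_assoc]
    _ ≤ |f.coeff i| * (Y ^ (f.natDegree - i) * Y ^ i) := by
        have hY : 0 ≤ Y := (abs_nonneg h).trans hh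
        gcongr
    _ = |f.coeff i| * Y ^ f.natDegree := by rw [pow_sub_mul_pow Y hi]

/-- The pairs `(N, k)` of a modulus `1 ≤ N ≤ L` and a root `k` of `f` modulo `N`. They parametrise
the ideals `R` of `ℤ[r]` with `ρ(R) = 1` and `N(R) ≤ L`. -/
noncomputable def modRoots (f : ℤ[X]) (L : ℕ) : Finset (Σ _ : ℕ, ℤ) :=
  (Finset.Icc 1 L).sigma (rootsMod f)

theorem mem_modRoots {f : ℤ[X]} {L : ℕ} {t : Σ _ : ℕ, ℤ} :
    t ∈ modRoots f L ↔ (1 ≤ t.1 ∧ t.1 ≤ L) ∧ t.2 ∈ rootsMod f t.1 := by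
  simp [modRoots]

/-- `N ∣ l + h k` forces `N` to divide the value at `(l, -h)` of the homogenisation of `f`. -/
theorem filter_modRoots_subset {f : ℤ[X]} (L : ℕ) {h l : ℤ}
    (hval : (f.scaleRoots (-h)).eval l ≠ 0) :
    ({t ∈ modRoots f L | (t.1 : ℤ) ∣ l + h * t.2} : Finset _) ⊆
      ({N ∈ ((f.scaleRoots (-h)).eval l).natAbs.divisors | N ≤ L} : Finset ℕ).sigma
        (rootsMod f) := by
  intro t ht
  obtain ⟨ht, hdvd⟩ := Finset.mem_filter.1 ht
  obtain ⟨⟨-, ht_le⟩, ht⟩ := mem_modRoots.1 ht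
  have : t.1 ∣ ((f.scaleRoots (-h)).eval l).natAbs := Int.natCast_dvd.1
    (dvd_eval_scaleRoots (mem_rootsMod.1 ht).2 (by rwa [neg_mul, sub_neg_eq_add]))
  exact Finset.mem_sigma.2
    ⟨Finset.mem_filter.2 ⟨Nat.mem_divisors.2 ⟨this, Int.natAbs_ne_zero.2 hval⟩, ht_le⟩, ht⟩

theorem exists_card_filter_modRoots_le_mul_rpow {f : ℤ[X]} (hf : Irreducible f)
    (hdeg : 2 ≤ f.natDegree) {δ : ℝ} (hδ : 0 < δ) :
    ∃ c ≥ 0, ∀ (L : ℕ) (h l : ℤ), h ≠ 0 → |h| ≤ L → |l| ≤ L →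
      (({t ∈ modRoots f L | (t.1 : ℤ) ∣ l + h * t.2} : Finset _).card : ℝ) ≤ c * (L : ℝ) ^ δ := by
  set d := f.natDegree
  obtain ⟨c₁, hc₁, card_divisors_le⟩ :=
    exists_card_divisors_le_mul_rpow (ε := δ / 2 / d) (by positivity)
  obtain ⟨c₂, hc₂, card_rootsMod_le⟩ :=
    exists_card_rootsMod_le_mul_rpow hf (by lia) (half_pos hδ)
  set s : ℤ := ∑ i ∈ Finset.range (d + 1), |f.coeff i|
  have : 0 ≤ s := by positivity
  refine ⟨c₁ * s ^ (δ / 2 / d) * c₂, by positivity, fun L h l hh hhL hlL => ?_⟩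
  set n : ℕ := ((f.scaleRoots (-h)).eval l).natAbs
  have hval := eval_scaleRoots_ne_zero hf hdeg (neg_ne_zero.2 hh) l
  have n_le : (n : ℝ) ≤ s * L ^ d := by
    have : (n : ℤ) ≤ s * L ^ d := (Int.natCast_natAbs _).trans_le
      (abs_eval_scaleRoots_le f (by rwa [abs_neg] : |-h| ≤ L) hlL)
    exact_mod_cast this
  calc _ ≤ ∑ N ∈ n.divisors.filter (· ≤ L), ((rootsMod f N).card : ℝ) := by
        exact_mod_cast (Finset.card_le_card (filter_modRoots_subset L hval)).trans_eq
          (Finset.card_sigma _ _)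
    _ ≤ ∑ _N ∈ n.divisors.filter (· ≤ L), c₂ * (L : ℝ) ^ (δ / 2) := by
        refine Finset.sum_le_sum fun N hN => ?_
        obtain ⟨hN, hNL⟩ := Finset.mem_filter.1 hN
        exact (card_rootsMod_le N (Nat.pos_of_mem_divisors hN).ne').trans (by gcongr)
    _ ≤ n.divisors.card * (c₂ * (L : ℝ) ^ (δ / 2)) := by
        rw [Finset.sum_const, nsmul_eq_mul]
        gcongr
        exact Finset.filter_subset _ _
    _ ≤ c₁ * (s * L ^ d) ^ (δ / 2 / d) * (c₂ * (L : ℝ) ^ (δ / 2)) := by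
        gcongr
        exact (card_divisors_le n (Int.natAbs_ne_zero.2 hval)).trans (by gcongr)
    _ = c₁ * s ^ (δ / 2 / d) * c₂ * (L : ℝ) ^ δ := by
        rw [Real.mul_rpow (by positivity) (by positivity), ← Real.rpow_natCast_mul L.cast_nonneg,
          mul_div_cancel₀ _ (by positivity)]
        have : (L : ℝ) ^ δ = L ^ (δ / 2) * L ^ (δ / 2) := by
          rw [← Real.rpow_add_of_nonneg L.cast_nonneg (by positivity) (by positivity), add_halves]
        rw [this]
        ring

/-! ### Fourier expansion of a congruence count -/

theorem four_mul_abs_valMinAbs_div_le_norm_stdAddChar_sub_one {N : ℕ} [NeZero N] (h : ZMod N) :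
    4 * |(h.valMinAbs : ℝ)| / N ≤ ‖ZMod.stdAddChar h - 1‖ := by
  have hN : (0 : ℝ) < N := Nat.cast_pos.2 (NeZero.pos N)
  set θ : ℝ := Real.pi * h.valMinAbs / N
  have hθ : |θ| = Real.pi / N * |(h.valMinAbs : ℝ)| := by
    rw [abs_div, abs_mul, abs_of_pos Real.pi_pos, abs_of_pos hN]
    ring
  have hchar : ZMod.stdAddChar h = Complex.exp (Complex.I * ((2 * θ : ℝ) : ℂ)) := by
    conv_lhs => rw [← ZMod.coe_valMinAbs h, ZMod.stdAddChar_coe]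
    push_cast [θ]
    ring_nf
  have abs_le : |(h.valMinAbs : ℝ)| ≤ N / 2 := by
    have : |h.valMinAbs| * 2 ≤ N := by
      have := h.valMinAbs_mem_Ioc
      grind
    rw [le_div_iff₀ two_pos]
    exact_mod_cast this
  have hsin : 2 / Real.pi * |θ| ≤ |Real.sin θ| := Real.mul_abs_le_abs_sin <| by
    calc |θ| ≤ Real.pi / N * (N / 2) := by rw [hθ]; gcongr
      _ = Real.pi / 2 := by field_simp
  calc 4 * |(h.valMinAbs : ℝ)| / N = 2 * (2 / Real.pi * |θ|) := by rw [hθ]; field_simp; ring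
    _ ≤ 2 * |Real.sin θ| := by gcongr
    _ = ‖ZMod.stdAddChar h - 1‖ := by
      rw [hchar, Complex.norm_exp_I_mul_ofReal_sub_one, mul_div_cancel_left₀ _ two_ne_zero,
        norm_mul, Real.norm_two, Real.norm_eq_abs]

theorem sum_Icc_int_sub {G : Type*} [AddCommGroup G] (g : ℤ → G) {u v : ℤ} (huv : u ≤ v) :
    ∑ a ∈ Finset.Icc u v, (g (a + 1) - g a) = g (v + 1) - g u := by
  induction v, huv using Int.leInduction with
  | base => simp
  | succ v huv ih =>
    rw [← Finset.insert_Icc_right_eq_Icc_add_one (by lia), Finset.sum_insert (by simp), ih,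
      sub_add_sub_cancel]

/-- The exponential sum `∑_{a ∈ I} e(h a / N)`. -/
noncomputable def expSum {N : ℕ} [NeZero N] (I : Finset ℤ) (h : ZMod N) : ℂ :=
  ∑ a ∈ I, ZMod.stdAddChar (h * (a : ZMod N))

/-- The size `M` (if `l = 0`) or `T / |l|` (if `l ≠ 0`) of an exponential sum over an interval at
frequency `l`, in place of the usual `min(M, T / |l|)`. -/
noncomputable def freqWeight (M T : ℝ) (l : ℤ) : ℝ :=
  if l = 0 then M else T / |(l : ℝ)|

theorem freqWeight_nonneg {M T : ℝ} (hM : 0 ≤ M) (hT : 0 ≤ T) (l : ℤ) : 0 ≤ freqWeight M T l := by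
  unfold freqWeight
  split_ifs <;> positivity

section ExponentialSums

variable {N : ℕ} [NeZero N]

theorem norm_expSum_Icc_mul_norm_stdAddChar_sub_one_le (h : ZMod N) (u v : ℤ) :
    ‖expSum (Finset.Icc u v) h‖ * ‖ZMod.stdAddChar h - 1‖ ≤ 2 := by
  rcases lt_or_ge v u with hvu | huv
  · simp [expSum, Finset.Icc_eq_empty_of_lt hvu]
  have telescoped : expSum (Finset.Icc u v) h * (ZMod.stdAddChar h - 1) =
      ZMod.stdAddChar (h * ((v + 1 : ℤ) : ZMod N)) - ZMod.stdAddChar (h * (u : ZMod N)) := by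
    rw [← sum_Icc_int_sub (fun a : ℤ => ZMod.stdAddChar (h * (a : ZMod N))) huv, expSum,
      Finset.sum_mul]
    refine Finset.sum_congr rfl fun a _ => ?_
    rw [Int.cast_add, Int.cast_one, mul_add, mul_one, AddChar.map_add_eq_mul]
    ring
  rw [← norm_mul, telescoped]
  refine (norm_sub_le _ _).trans ?_
  rw [AddChar.norm_apply, AddChar.norm_apply]
  norm_num

theorem norm_expSum_Icc_le (h : ZMod N) (u v : ℤ) :
    ‖expSum (Finset.Icc u v) h‖ ≤ freqWeight (Finset.Icc u v).card (N / 2) h.valMinAbs := by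
  unfold freqWeight
  split_ifs with h_zero
  · simpa [expSum] using
      norm_sum_le (Finset.Icc u v) fun a : ℤ => ZMod.stdAddChar (h * (a : ZMod N))
  · have hN : (0 : ℝ) < N := Nat.cast_pos.2 (NeZero.pos N)
    have abs_pos : 0 < |(h.valMinAbs : ℝ)| := abs_pos.2 (Int.cast_ne_zero.2 h_zero)
    have := (mul_le_mul_of_nonneg_left (four_mul_abs_valMinAbs_div_le_norm_stdAddChar_sub_one h)
      (norm_nonneg _)).trans (norm_expSum_Icc_mul_norm_stdAddChar_sub_one_le h u v)
    rw [← mul_div_assoc, div_le_iff₀ hN] at this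
    rw [le_div_iff₀ abs_pos]
    linarith

theorem natCast_mul_card_filter_dvd_eq_sum_expSum (I J : Finset ℤ) (k : ℤ) :
    (N : ℂ) * ({ab ∈ I ×ˢ J | (N : ℤ) ∣ ab.1 - ab.2 * k} : Finset _).card =
      ∑ h : ZMod N, expSum I h * expSum J (-(h * (k : ZMod N))) := by
  have expSum_mul (h : ZMod N) : expSum I h * expSum J (-(h * (k : ZMod N))) =
      ∑ ab ∈ I ×ˢ J, ZMod.stdAddChar (h * ((ab.1 - ab.2 * k : ℤ) : ZMod N)) := by
    rw [expSum, expSum, Finset.sum_mul_sum, ← Finset.sum_product']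
    refine Finset.sum_congr rfl fun ab _ => ?_
    rw [← AddChar.map_add_eq_mul]
    push_cast
    ring_nf
  simp_rw [expSum_mul]
  rw [Finset.sum_comm]
  simp_rw [AddChar.sum_mulShift _ (ZMod.isPrimitive_stdAddChar N), ZMod.card,
    ZMod.intCast_zmod_eq_zero_iff_dvd, Nat.cast_ite, Nat.cast_zero]
  rw [← Finset.sum_filter, Finset.sum_const, nsmul_eq_mul, mul_comm]

theorem abs_card_filter_dvd_sub_le (u v u' v' k : ℤ) :
    |(({ab ∈ Finset.Icc u v ×ˢ Finset.Icc u' v' | (N : ℤ) ∣ ab.1 - ab.2 * k} : Finset _).card : ℝ)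
      - (Finset.Icc u v).card * (Finset.Icc u' v').card / N| ≤
    ∑ h ∈ Finset.univ.erase (0 : ZMod N),
      freqWeight (Finset.Icc u' v').card (N / 2) (-(h * (k : ZMod N))).valMinAbs /
        (2 * |(h.valMinAbs : ℝ)|) := by
  have hN : (0 : ℝ) < N := Nat.cast_pos.2 (NeZero.pos N)
  set I := Finset.Icc u v
  set J := Finset.Icc u' v'
  set S := ({ab ∈ I ×ˢ J | (N : ℤ) ∣ ab.1 - ab.2 * k} : Finset _).card
  have fourier : ((N * (S - I.card * J.card / N : ℝ) : ℝ) : ℂ) =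
      ∑ h ∈ Finset.univ.erase (0 : ZMod N), expSum I h * expSum J (-(h * (k : ZMod N))) := by
    rw [Finset.sum_erase_eq_sub (Finset.mem_univ _), ← natCast_mul_card_filter_dvd_eq_sum_expSum,
      mul_sub, mul_div_cancel₀ _ hN.ne']
    simp [expSum, I, J, S]
  refine le_of_mul_le_mul_left ?_ hN
  calc (N : ℝ) * |(S - I.card * J.card / N : ℝ)|
      = ‖∑ h ∈ Finset.univ.erase (0 : ZMod N), expSum I h * expSum J (-(h * (k : ZMod N)))‖ := by
        rw [← fourier, Complex.norm_real, Real.norm_eq_abs, abs_mul, abs_of_pos hN]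
    _ ≤ ∑ h ∈ Finset.univ.erase (0 : ZMod N), freqWeight I.card (N / 2) h.valMinAbs *
          freqWeight J.card (N / 2) (-(h * (k : ZMod N))).valMinAbs := by
        refine norm_sum_le_of_le _ fun h _ => ?_
        rw [norm_mul]
        gcongr
        · exact freqWeight_nonneg (by positivity) (by positivity) _
        · exact norm_expSum_Icc_le h u v
        · exact norm_expSum_Icc_le _ u' v'
    _ = N * ∑ h ∈ Finset.univ.erase (0 : ZMod N),
          freqWeight J.card (N / 2) (-(h * (k : ZMod N))).valMinAbs /
            (2 * |(h.valMinAbs : ℝ)|) := by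
        rw [Finset.mul_sum]
        refine Finset.sum_congr rfl fun h hh => ?_
        rw [freqWeight, if_neg ((ZMod.valMinAbs_eq_zero h).not.2 (Finset.ne_of_mem_erase hh))]
        ring

end ExponentialSums

/-! ### Summation over moduli and roots -/

theorem freqWeight_le_mul {M M' T T' c : ℝ} (hM : M ≤ c * M') (hT : T ≤ c * T') (l : ℤ) :
    freqWeight M T l ≤ c * freqWeight M' T' l := by
  unfold freqWeight
  split_ifs
  · exact hM
  · rw [← mul_div_assoc]
    gcongr

theorem abs_card_Icc_ceil_floor_sub_le (A : ℝ) {M : ℝ} (hM : 0 ≤ M) :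
    |((Finset.Icc ⌈A⌉ ⌊A + M⌋).card : ℝ) - M| ≤ 1 := by
  have floor_le := Int.floor_le (A + M)
  have lt_floor := Int.lt_floor_add_one (A + M)
  have le_ceil := Int.le_ceil A
  have ceil_lt := Int.ceil_lt_add_one A
  have card_eq : ((Finset.Icc ⌈A⌉ ⌊A + M⌋).card : ℝ) = ⌊A + M⌋ + 1 - ⌈A⌉ := by
    have : ⌈A⌉ < ⌊A + M⌋ + 2 := by
      rify
      linarith
    exact_mod_cast Int.card_Icc_of_le ⌈A⌉ ⌊A + M⌋ (by lia)
  rw [card_eq, abs_le]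
  constructor <;> linarith

/-- The number of integer points `(a, b)` with `A ≤ a ≤ A + M`, `B ≤ b ≤ B + M` and
`a ≡ b k (mod N)`. -/
noncomputable def boxCount (A B M : ℝ) (N : ℕ) (k : ℤ) : ℕ :=
  ({ab ∈ Finset.Icc ⌈A⌉ ⌊A + M⌋ ×ˢ Finset.Icc ⌈B⌉ ⌊B + M⌋ | (N : ℤ) ∣ ab.1 - ab.2 * k} :
    Finset (ℤ × ℤ)).card

/-- The frequencies `(h, l)` with `|h|, |l| ≤ L` and `h ≠ 0`; those with `l ≡ -h k (mod N)` occur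
in the Fourier expansion of `boxCount A B M N k`. -/
noncomputable def freqPairs (L : ℕ) : Finset (ℤ × ℤ) :=
  (Finset.Icc (-L : ℤ) L).erase 0 ×ˢ Finset.Icc (-L : ℤ) L

theorem mem_freqPairs {L : ℕ} {x : ℤ × ℤ} :
    x ∈ freqPairs L ↔ x.1 ≠ 0 ∧ |x.1| ≤ L ∧ |x.2| ≤ L := by
  simp [freqPairs, abs_le, and_assoc]

theorem sum_valMinAbs_le_sum_freqPairs {F : ℤ × ℤ → ℝ} (hF : ∀ x, 0 ≤ F x) {N L : ℕ} [NeZero N]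
    (hNL : N ≤ L) (k : ℤ) :
    ∑ h ∈ Finset.univ.erase (0 : ZMod N), F (h.valMinAbs, (-(h * (k : ZMod N))).valMinAbs) ≤
      ∑ x ∈ freqPairs L with (N : ℤ) ∣ x.2 + x.1 * k, F x := by
  have abs_valMinAbs_le (h : ZMod N) : |h.valMinAbs| ≤ L := by
    have := h.valMinAbs_mem_Ioc
    grind
  rw [← Finset.sum_image (f := F) fun h _ h' _ hh' =>
    ZMod.injective_valMinAbs (Prod.ext_iff.1 hh').1]
  refine Finset.sum_le_sum_of_subset_of_nonneg (Finset.image_subset_iff.2 fun h hh => ?_)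
    fun x _ _ => hF x
  refine Finset.mem_filter.2 ⟨mem_freqPairs.2 ⟨?_, abs_valMinAbs_le _, abs_valMinAbs_le _⟩, ?_⟩
  · exact (ZMod.valMinAbs_eq_zero h).not.2 (Finset.ne_of_mem_erase hh)
  · simp [← ZMod.intCast_zmod_eq_zero_iff_dvd]

theorem abs_boxCount_sub_le (A B : ℝ) {M : ℝ} (hM : 1 ≤ M) {N L : ℕ} (hN : N ≠ 0) (hNL : N ≤ L)
    (k : ℤ) :
    |(boxCount A B M N k : ℝ) - M ^ 2 / N| ≤ 3 * M * (N : ℝ)⁻¹ +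
      ∑ x ∈ freqPairs L with (N : ℤ) ∣ x.2 + x.1 * k, |(x.1 : ℝ)|⁻¹ * freqWeight M L x.2 := by
  have : NeZero N := ⟨hN⟩
  have card_a := abs_le.1 (abs_card_Icc_ceil_floor_sub_le A (zero_le_one.trans hM))
  have card_b := abs_le.1 (abs_card_Icc_ceil_floor_sub_le B (zero_le_one.trans hM))
  set α : ℝ := ((Finset.Icc ⌈A⌉ ⌊A + M⌋).card : ℝ)
  set β : ℝ := ((Finset.Icc ⌈B⌉ ⌊B + M⌋).card : ℝ)
  have main_term : |α * β / N - M ^ 2 / N| ≤ 3 * M * (N : ℝ)⁻¹ := by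
    rw [← sub_div, abs_div, Nat.abs_cast, div_eq_mul_inv]
    gcongr
    exact abs_le.2 ⟨by nlinarith, by nlinarith⟩
  have error_term : |(boxCount A B M N k : ℝ) - α * β / N| ≤
      ∑ x ∈ freqPairs L with (N : ℤ) ∣ x.2 + x.1 * k, |(x.1 : ℝ)|⁻¹ * freqWeight M L x.2 := by
    refine (abs_card_filter_dvd_sub_le _ _ _ _ k).trans (le_trans (Finset.sum_le_sum fun h _ => ?_)
      (sum_valMinAbs_le_sum_freqPairs (fun x => mul_nonneg (by positivity)
        (freqWeight_nonneg (zero_le_one.trans hM) L.cast_nonneg _)) hNL k))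
    have hNL' : (N : ℝ) ≤ L := Nat.cast_le.2 hNL
    calc freqWeight β (N / 2) (-(h * (k : ZMod N))).valMinAbs / (2 * |(h.valMinAbs : ℝ)|)
        ≤ 2 * freqWeight M L (-(h * (k : ZMod N))).valMinAbs / (2 * |(h.valMinAbs : ℝ)|) := by
          gcongr
          exact freqWeight_le_mul (by linarith) (by linarith [N.cast_nonneg (α := ℝ)]) _
      _ = _ := by rw [mul_div_mul_left _ _ two_ne_zero, div_eq_inv_mul]
  linarith [abs_sub_le (boxCount A B M N k : ℝ) (α * β / N) (M ^ 2 / N)]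

theorem sum_Icc_neg_inv_abs (L : ℕ) :
    ∑ l ∈ Finset.Icc (-L : ℤ) L, |(l : ℝ)|⁻¹ = 2 * (harmonic L : ℝ) := by
  rw [Finset.sum_Icc_of_even_eq_range fun l => by simp]
  simp [harmonic, Finset.sum_range_succ', two_mul]

theorem sum_Icc_neg_freqWeight (M T : ℝ) (L : ℕ) :
    ∑ l ∈ Finset.Icc (-L : ℤ) L, freqWeight M T l = M + T * (2 * harmonic L) := by
  have freqWeight_eq (l : ℤ) : freqWeight M T l = (if l = 0 then M else 0) + T * |(l : ℝ)|⁻¹ := by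
    rcases eq_or_ne l 0 with rfl | hl <;> simp [freqWeight, *, div_eq_mul_inv]
  simp_rw [freqWeight_eq, Finset.sum_add_distrib, ← Finset.mul_sum, sum_Icc_neg_inv_abs]
  simp

theorem sum_freqPairs_inv_abs_mul_freqWeight (M T : ℝ) (L : ℕ) :
    ∑ x ∈ freqPairs L, |(x.1 : ℝ)|⁻¹ * freqWeight M T x.2 =
      2 * harmonic L * (M + T * (2 * harmonic L)) := by
  rw [freqPairs, Finset.sum_product, ← sum_Icc_neg_freqWeight M T, ← sum_Icc_neg_inv_abs,
    Finset.sum_mul_sum, Finset.sum_erase _ (by simp)]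

theorem harmonic_le_mul_rpow {δ : ℝ} (hδ : 0 < δ) {L : ℕ} (hL : 1 ≤ L) :
    (harmonic L : ℝ) ≤ (1 + δ⁻¹) * (L : ℝ) ^ δ := by
  have log_le := Real.log_le_rpow_div L.cast_nonneg hδ
  have one_le : 1 ≤ (L : ℝ) ^ δ := Real.one_le_rpow (by exact_mod_cast hL) hδ.le
  rw [div_eq_inv_mul] at log_le
  linarith [harmonic_le_one_add_log L]

theorem sum_modRoots_inv_le {f : ℤ[X]} {L : ℕ} {b : ℝ}
    (hb : ∀ N ∈ Finset.Icc 1 L, ((rootsMod f N).card : ℝ) ≤ b) :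
    ∑ t ∈ modRoots f L, (t.1 : ℝ)⁻¹ ≤ b * harmonic L := by
  rw [modRoots, Finset.sum_sigma, harmonic_eq_sum_Icc, Rat.cast_sum, Finset.mul_sum]
  refine Finset.sum_le_sum fun N hN => ?_
  simp only [Finset.sum_const, nsmul_eq_mul, Rat.cast_inv, Rat.cast_natCast]
  gcongr
  exact hb N hN

theorem sum_modRoots_sum_freqPairs_le {f : ℤ[X]} {L : ℕ} {b : ℝ}
    (hb : ∀ x ∈ freqPairs L,
      (({t ∈ modRoots f L | (t.1 : ℤ) ∣ x.2 + x.1 * t.2} : Finset _).card : ℝ) ≤ b)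
    {F : ℤ × ℤ → ℝ} (hF : ∀ x, 0 ≤ F x) :
    ∑ t ∈ modRoots f L, ∑ x ∈ freqPairs L with (t.1 : ℤ) ∣ x.2 + x.1 * t.2, F x ≤
      b * ∑ x ∈ freqPairs L, F x := by
  simp_rw [Finset.sum_filter]
  rw [Finset.sum_comm, Finset.mul_sum]
  refine Finset.sum_le_sum fun x hx => ?_
  rw [← Finset.sum_filter, Finset.sum_const, nsmul_eq_mul]
  exact mul_le_mul_of_nonneg_right (hb x hx) (hF x)

theorem sum_modRoots_abs_boxCount_sub_le {f : ℤ[X]} {L : ℕ} {b₁ b₂ : ℝ}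
    (hb₁ : ∀ N ∈ Finset.Icc 1 L, ((rootsMod f N).card : ℝ) ≤ b₁)
    (hb₂ : ∀ x ∈ freqPairs L,
      (({t ∈ modRoots f L | (t.1 : ℤ) ∣ x.2 + x.1 * t.2} : Finset _).card : ℝ) ≤ b₂)
    (A B : ℝ) {M : ℝ} (hM : 1 ≤ M) :
    ∑ t ∈ modRoots f L, |(boxCount A B M t.1 t.2 : ℝ) - M ^ 2 / t.1| ≤
      3 * M * (b₁ * harmonic L) + b₂ * (2 * harmonic L * (M + L * (2 * harmonic L))) := by
  calc _ ≤ ∑ t ∈ modRoots f L, (3 * M * (t.1 : ℝ)⁻¹ + ∑ x ∈ freqPairs L with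
            (t.1 : ℤ) ∣ x.2 + x.1 * t.2, |(x.1 : ℝ)|⁻¹ * freqWeight M L x.2) := by
        refine Finset.sum_le_sum fun t ht => ?_
        obtain ⟨⟨ht, htL⟩, -⟩ := mem_modRoots.1 ht
        exact abs_boxCount_sub_le A B hM (by lia) htL t.2
    _ ≤ _ := by
        rw [Finset.sum_add_distrib, ← Finset.mul_sum, ← sum_freqPairs_inv_abs_mul_freqWeight]
        gcongr
        · exact sum_modRoots_inv_le hb₁
        · exact sum_modRoots_sum_freqPairs_le hb₂ fun x => mul_nonneg (by positivity)
            (freqWeight_nonneg (by positivity) (by positivity) _)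

theorem exists_sum_modRoots_abs_boxCount_sub_le {f : ℤ[X]} (hf : Irreducible f)
    (hdeg : 2 ≤ f.natDegree) {ε : ℝ} (hε : 0 < ε) :
    ∃ c ≥ 0, ∀ A B M : ℝ, 1 ≤ M → ∀ L : ℕ, 1 ≤ L →
      ∑ t ∈ modRoots f L, |(boxCount A B M t.1 t.2 : ℝ) - M ^ 2 / t.1| ≤
        c * (M + L) * (L : ℝ) ^ ε := by
  have hδ : 0 < ε / 3 := by positivity
  obtain ⟨c₁, hc₁, card_rootsMod_le⟩ := exists_card_rootsMod_le_mul_rpow hf (by lia) hδ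
  obtain ⟨c₂, hc₂, card_filter_le⟩ := exists_card_filter_modRoots_le_mul_rpow hf hdeg hδ
  set a := 1 + (ε / 3)⁻¹
  refine ⟨3 * c₁ * a + 2 * c₂ * a + 4 * c₂ * a ^ 2, by positivity, fun A B M hM L hL => ?_⟩
  have rpow_eq : (L : ℝ) ^ ε = ((L : ℝ) ^ (ε / 3)) ^ 3 := by
    rw [← Real.rpow_mul_natCast L.cast_nonneg]
    norm_num
  have one_le : 1 ≤ (L : ℝ) ^ (ε / 3) := Real.one_le_rpow (by exact_mod_cast hL) hδ.le
  have harmonic_le := harmonic_le_mul_rpow hδ hL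
  have harmonic_nonneg : (0 : ℝ) ≤ harmonic L := by rw [harmonic]; positivity
  rw [rpow_eq]
  set Q := (L : ℝ) ^ (ε / 3)
  calc _ ≤ 3 * M * (c₁ * Q * harmonic L) +
          c₂ * Q * (2 * harmonic L * (M + L * (2 * harmonic L))) := by
        refine sum_modRoots_abs_boxCount_sub_le (fun N hN => ?_) (fun x hx => ?_) A B hM
        · obtain ⟨hN, hNL⟩ := Finset.mem_Icc.1 hN
          exact (card_rootsMod_le N (by lia)).trans (by simp only [Q]; gcongr)
        · obtain ⟨h_ne, h_le, l_le⟩ := mem_freqPairs.1 hx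
          exact card_filter_le L x.1 x.2 h_ne h_le l_le
    _ ≤ 3 * M * (c₁ * Q * (a * Q)) + c₂ * Q * (2 * (a * Q) * (M + L * (2 * (a * Q)))) := by gcongr
    _ = (3 * c₁ * a + 2 * c₂ * a) * M * Q ^ 2 + 4 * c₂ * a ^ 2 * L * Q ^ 3 := by ring
    _ ≤ (3 * c₁ * a + 2 * c₂ * a) * (M + L) * Q ^ 3 + 4 * c₂ * a ^ 2 * (M + L) * Q ^ 3 := by
        gcongr <;> linarith
    _ = _ := by ring

/-! ### Ideals with `ρ = 1` -/

section IdealsOfMonogenicRings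

variable {R : Type*} [CommRing R] {θ : R} {I : Ideal R} {k : ℤ}

theorem intCast_eval_sub_aeval_mem (hk : (k : R) - θ ∈ I) (p : ℤ[X]) :
    ((p.eval k : ℤ) : R) - aeval θ p ∈ I := by
  have hcast : ((p.eval k : ℤ) : R) = aeval (k : R) p := by
    simp [aeval_def, eval₂_eq_eval_map]
  have hdvd : (k : R) - θ ∣ aeval (k : R) p - aeval θ p := by
    simpa only [eval_map_algebraMap] using
      sub_dvd_eval_sub (k : R) θ (p.map (algebraMap ℤ R))
  rw [hcast]
  exact I.mem_of_dvd hdvd hk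

theorem exists_sub_intCast_mem (hθ : Algebra.adjoin ℤ {θ} = ⊤) (hk : (k : R) - θ ∈ I) (x : R) :
    ∃ n : ℤ, x - n ∈ I := by
  obtain ⟨p, rfl⟩ : x ∈ (aeval (R := ℤ) θ).range := by
    rw [← Algebra.adjoin_singleton_eq_range_aeval, hθ]
    trivial
  exact ⟨p.eval k, by simpa using I.neg_mem (intCast_eval_sub_aeval_mem hk p)⟩

theorem intCast_mem_iff_card_quotient_dvd (hθ : Algebra.adjoin ℤ {θ} = ⊤) (hk : (k : R) - θ ∈ I)
    (n : ℤ) : (n : R) ∈ I ↔ (Nat.card (R ⧸ I) : ℤ) ∣ n := by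
  have one_generates : ∀ y : R ⧸ I, y ∈ AddSubgroup.zmultiples (1 : R ⧸ I) := by
    intro y
    obtain ⟨x, rfl⟩ := Ideal.Quotient.mk_surjective y
    obtain ⟨n, hn⟩ := exists_sub_intCast_mem hθ hk x
    exact ⟨n, by simpa using (Ideal.Quotient.eq.2 hn).symm⟩
  rw [← addOrderOf_eq_card_of_forall_mem_zmultiples one_generates, addOrderOf_dvd_iff_zsmul_eq_zero,
    ← Ideal.Quotient.eq_zero_iff_mem]
  simp

theorem eq_span_card_quotient (hθ : Algebra.adjoin ℤ {θ} = ⊤) (hk : (k : R) - θ ∈ I) :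
    I = Ideal.span {(Nat.card (R ⧸ I) : R), (k : R) - θ} := by
  set N := Nat.card (R ⧸ I)
  refine le_antisymm (fun x hx => ?_) (Ideal.span_le.2 ?_)
  · obtain ⟨n, hn⟩ := exists_sub_intCast_mem hθ (Ideal.mem_span_singleton_self ((k : R) - θ)) x
    have hnI : (n : R) ∈ I := by
      simpa using I.sub_mem hx ((Ideal.span_singleton_le_iff_mem I).2 hk hn)
    obtain ⟨m, hm⟩ := (intCast_mem_iff_card_quotient_dvd hθ hk n).1 hnI
    obtain ⟨y, hy⟩ := Ideal.mem_span_singleton'.1 hn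
    refine Ideal.mem_span_pair.2 ⟨m, y, ?_⟩
    rw [hy, hm]
    push_cast
    ring
  · have : (N : R) ∈ I := by
      exact_mod_cast (intCast_mem_iff_card_quotient_dvd hθ hk N).2 dvd_rfl
    simp [Set.insert_subset_iff, this, hk]

theorem eq_of_card_quotient_eq (hθ : Algebra.adjoin ℤ {θ} = ⊤) {J : Ideal R}
    (hI : (k : R) - θ ∈ I) (hJ : (k : R) - θ ∈ J) (hcard : Nat.card (R ⧸ I) = Nat.card (R ⧸ J)) :
    I = J := by
  rw [eq_span_card_quotient hθ hI, eq_span_card_quotient hθ hJ, hcard]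

theorem intCast_sub_mul_mem_iff (hθ : Algebra.adjoin ℤ {θ} = ⊤) (hk : (k : R) - θ ∈ I) (a b : ℤ) :
    (a : R) - b * θ ∈ I ↔ (Nat.card (R ⧸ I) : ℤ) ∣ a - b * k := by
  have : (a : R) - b * θ = ((a - b * k : ℤ) : R) + b * ((k : R) - θ) := by
    push_cast
    ring
  rw [← intCast_mem_iff_card_quotient_dvd hθ hk, this]
  exact I.add_mem_iff_left (I.mul_mem_left _ hk)

theorem card_box_eq_boxCount (hθ : Algebra.adjoin ℤ {θ} = ⊤) (hk : (k : R) - θ ∈ I) (A B M : ℝ) :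
    Nat.card {ab : ℤ × ℤ // A ≤ (ab.1 : ℝ) ∧ (ab.1 : ℝ) ≤ A + M ∧ B ≤ (ab.2 : ℝ) ∧
      (ab.2 : ℝ) ≤ B + M ∧ (ab.1 : R) - ab.2 * θ ∈ I} = boxCount A B M (Nat.card (R ⧸ I)) k := by
  refine Nat.subtype_card _ fun ab => ?_
  simp only [Finset.mem_filter, Finset.mem_product, Finset.mem_Icc, Int.ceil_le, Int.le_floor,
    intCast_sub_mul_mem_iff hθ hk, and_assoc]

theorem exists_mem_rootsMod_card_quotient (hθ : Algebra.adjoin ℤ {θ} = ⊤) {f : ℤ[X]}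
    (hf : aeval θ f = 0) (hI : Nat.card (R ⧸ I) ≠ 0) (hk : (k : R) - θ ∈ I) :
    ∃ k' ∈ rootsMod f (Nat.card (R ⧸ I)), (k' : R) - θ ∈ I := by
  have eval_mem := intCast_eval_sub_aeval_mem hk f
  rw [hf, sub_zero, intCast_mem_iff_card_quotient_dvd hθ hk] at eval_mem
  refine ⟨_, emod_mem_rootsMod hI eval_mem, ?_⟩
  have := I.sub_mem hk ((intCast_mem_iff_card_quotient_dvd hθ hk _).2
    (Int.dvd_self_sub_emod (x := k) (m := Nat.card (R ⧸ I))))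
  convert this using 1
  push_cast
  ring

end IdealsOfMonogenicRings

section IdealsOfZr

variable {K : Type*} [Field K] {r : K}

theorem adjoin_rZ (r : K) : Algebra.adjoin ℤ {rZ r} = ⊤ := by
  have : ({rZ r} : Set (Zr r)) = Subtype.val ⁻¹' {r} := by
    ext x
    simp [rZ, Subtype.ext_iff]
  rw [this]
  exact Algebra.adjoin_adjoin_coe_preimage

theorem aeval_rZ {f : ℤ[X]} (hr : aeval r f = 0) : aeval (rZ r) f = 0 :=
  Subtype.ext ((aeval_algHom_apply (Zr r).val (rZ r) f).symm.trans hr)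

theorem exists_intCast_sub_rZ_mem {R : Ideal (Zr r)} (hR : rho r R = 1) :
    ∃ n : ℤ, (n : Zr r) - rZ r ∈ R := by
  obtain ⟨⟨_, n, -, hn⟩⟩ := (Nat.card_pos_iff.1 (hR.symm ▸ one_pos : 0 < rho r R)).1
  exact ⟨n, hn⟩

theorem Nrm_ne_zero_of_rho_eq_one {f : ℤ[X]} (hf : Irreducible f) (hdeg : 2 ≤ f.natDegree)
    (hr : aeval r f = 0) {R : Ideal (Zr r)} (hR : rho r R = 1) : Nrm r R ≠ 0 := by
  intro h_zero
  obtain ⟨n, hn⟩ := exists_intCast_sub_rZ_mem hR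
  have eval_mem := intCast_eval_sub_aeval_mem hn f
  rw [aeval_rZ hr, sub_zero, intCast_mem_iff_card_quotient_dvd (adjoin_rZ r) hn] at eval_mem
  have eval_eq_zero : f.eval n = 0 := by
    rwa [show Nat.card (Zr r ⧸ R) = 0 from h_zero, Nat.cast_zero, zero_dvd_iff] at eval_mem
  exact aeval_rat_ne_zero hf hdeg n (by simp [aeval_def, eval₂_at_intCast, eval_eq_zero])

theorem exists_mem_rootsMod_Nrm {f : ℤ[X]} (hf : Irreducible f) (hdeg : 2 ≤ f.natDegree)
    (hr : aeval r f = 0) {R : Ideal (Zr r)} (hR : rho r R = 1) :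
    ∃ k ∈ rootsMod f (Nrm r R), (k : Zr r) - rZ r ∈ R := by
  obtain ⟨n, hn⟩ := exists_intCast_sub_rZ_mem hR
  exact exists_mem_rootsMod_card_quotient (adjoin_rZ r) (aeval_rZ hr)
    (Nrm_ne_zero_of_rho_eq_one hf hdeg hr hR) hn

end IdealsOfZr

theorem finsum_ite_le_sum_of_injOn {α β M : Type*} [AddCommMonoid M] [PartialOrder M]
    [IsOrderedAddMonoid M] {p : α → Prop} [DecidablePred p] {g : α → M} {G : β → M} {φ : α → β}
    {t : Finset β} (hφ : {a | p a}.InjOn φ) (hmaps : ∀ a, p a → φ a ∈ t)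
    (hg : ∀ a, p a → g a = G (φ a)) (hG : ∀ b, 0 ≤ G b) :
    ∑ᶠ a, (if p a then g a else 0) ≤ ∑ b ∈ t, G b := by
  have hfin : {a | p a}.Finite :=
    Set.Finite.of_finite_image (t.finite_toSet.subset (Set.image_subset_iff.2 hmaps)) hφ
  classical
  calc ∑ᶠ a, (if p a then g a else 0) = ∑ a ∈ hfin.toFinset, if p a then g a else 0 :=
        finsum_eq_sum_of_support_subset _ fun a ha => by
          by_contra hpa
          simp_all
    _ = ∑ a ∈ hfin.toFinset, G (φ a) := by
        refine Finset.sum_congr rfl fun a ha => ?_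
        have hpa : p a := hfin.mem_toFinset.1 ha
        rw [if_pos hpa, hg a hpa]
    _ = ∑ b ∈ hfin.toFinset.image φ, G b :=
        (Finset.sum_image (by simpa using hφ)).symm
    _ ≤ ∑ b ∈ t, G b := by
        refine Finset.sum_le_sum_of_subset_of_nonneg (Finset.image_subset_iff.2 fun a ha => ?_)
          fun b _ _ => hG b
        exact hmaps a (hfin.mem_toFinset.1 ha)

open Classical in
theorem stmt_19_general {f : ℤ[X]} (hf : Irreducible f) (hdeg : 2 ≤ f.natDegree) {K : Type*}
    [Field K] {r : K} (hr : aeval r f = 0) :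
    ∀ ε > (0 : ℝ), ∃ Cc : ℝ, ∀ A B : ℝ, ∀ M : ℝ, 1 ≤ M → ∀ Y : ℝ, 1 ≤ Y →
      (∑ᶠ R : Ideal (Zr r),
        if R ≠ ⊥ ∧ (Nrm r R : ℝ) ≤ Y ∧ rho r R = 1 then
          |(Nat.card {ab : ℤ × ℤ // A ≤ (ab.1 : ℝ) ∧ (ab.1 : ℝ) ≤ A + M ∧
              B ≤ (ab.2 : ℝ) ∧ (ab.2 : ℝ) ≤ B + M ∧
              (ab.1 : Zr r) - (ab.2 : Zr r) * rZ r ∈ R} : ℝ) - M ^ 2 / (Nrm r R : ℝ)|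
        else 0) ≤ Cc * (M + Y) * Y ^ ε := by
  intro ε hε
  obtain ⟨c, hc, sum_le⟩ := exists_sum_modRoots_abs_boxCount_sub_le hf hdeg hε
  refine ⟨c, fun A B M hM Y hY => ?_⟩
  choose! κ κ_mem hκ using fun R => exists_mem_rootsMod_Nrm (R := R) hf hdeg hr
  have floor_le : (⌊Y⌋₊ : ℝ) ≤ Y := Nat.floor_le (by positivity)
  calc _ ≤ ∑ t ∈ modRoots f ⌊Y⌋₊, |(boxCount A B M t.1 t.2 : ℝ) - M ^ 2 / t.1| := by
        refine finsum_ite_le_sum_of_injOn (φ := fun R => ⟨Nrm r R, κ R⟩) ?_ ?_ ?_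
          fun _ => abs_nonneg _
        · rintro R ⟨-, -, hR⟩ R' ⟨-, -, hR'⟩ h
          obtain ⟨hN, hk⟩ : Nrm r R = Nrm r R' ∧ κ R = κ R' := by simpa using h
          exact eq_of_card_quotient_eq (adjoin_rZ r) (hκ R hR) (hk ▸ hκ R' hR') hN
        · rintro R ⟨-, hRY, hR⟩
          have := Nrm_ne_zero_of_rho_eq_one hf hdeg hr hR
          exact mem_modRoots.2 ⟨⟨by lia, Nat.le_floor hRY⟩, κ_mem R hR⟩
        · rintro R ⟨-, -, hR⟩
          rw [card_box_eq_boxCount (adjoin_rZ r) (hκ R hR)]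
          rfl
    _ ≤ c * (M + ⌊Y⌋₊) * (⌊Y⌋₊ : ℝ) ^ ε := sum_le A B M hM _ (Nat.one_le_floor_iff _ |>.2 hY)
    _ ≤ c * (M + Y) * Y ^ ε := by gcongr

open Classical in
/-- For every `ε > 0` there is a constant `C` (depending only on `f` and
`ε`) such that for all reals `A, B`, all `M ≥ 1` and all `X ≥ 2`: with
`S(R) = #{(a, b) ∈ ℤ² : A ≤ a ≤ A + M, B ≤ b ≤ B + M, a − b·r ∈ R}`, one has
`∑_{R : N(R) ≤ X, ρ(R) = 1} |S(R) − M²/N(R)| ≤ C·(M + X)·X^ε`, the sum being over nonzero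
ideals `R` of `ℤ[r]` with `N(R) ≤ X` and `ρ(R) = 1`. -/
theorem stmt_19 (c₀ c₁ c₂ : ℤ)
    (hf : Irreducible (X ^ 3 + C c₂ * X ^ 2 + C c₁ * X + C c₀ : ℤ[X]))
    (K : Type*) [Field K] [NumberField K] (r : K)
    (hr : aeval r (X ^ 3 + C c₂ * X ^ 2 + C c₁ * X + C c₀ : ℤ[X]) = 0)
    (hgen : Algebra.adjoin ℚ {r} = ⊤) :
    ∀ ε > (0 : ℝ), ∃ Cc : ℝ, ∀ A B : ℝ, ∀ M : ℝ, 1 ≤ M → ∀ Y : ℝ, 2 ≤ Y →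
      (∑ᶠ R : Ideal (Zr r),
        if R ≠ ⊥ ∧ (Nrm r R : ℝ) ≤ Y ∧ rho r R = 1 then
          |(Nat.card {ab : ℤ × ℤ // A ≤ (ab.1 : ℝ) ∧ (ab.1 : ℝ) ≤ A + M ∧
              B ≤ (ab.2 : ℝ) ∧ (ab.2 : ℝ) ≤ B + M ∧
              (ab.1 : Zr r) - (ab.2 : Zr r) * rZ r ∈ R} : ℝ) - M ^ 2 / (Nrm r R : ℝ)|
        else 0) ≤ Cc * (M + Y) * Y ^ ε := by
  intro ε hε
  have hdeg : (X ^ 3 + C c₂ * X ^ 2 + C c₁ * X + C c₀ : ℤ[X]).natDegree = 3 := by compute_degree!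
  obtain ⟨c, hc⟩ := stmt_19_general hf (by lia) hr ε hε
  exact ⟨c, fun A B M hM Y hY => hc A B M hM Y (one_le_two.trans hY)⟩
end
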